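/- arXiv:2412.17233 — 2 statements merged into one kernel-verified Lean document; each statement's English description precedes it below -/
import Mathlib

section
/- Let A be an n×n real skew-symmetric matrix such that M_{j,k}(A) ≠ 0 for all integers 1 ≤ j ≤ k ≤ n−1. Then there exists t = (t_1,…,t_N) ∈ ℝ^N with t_i ≠ 0 for all i such that A = A(t). -/
noncomputable section

open Matrix

/-- `N = n(n-1)/2`, the number of parameters. -/
def Npar (n : ℕ) : ℕ := n * (n - 1) / 2

/-- The decreasing run `a, a-1, …, b` (empty if `b > a`). -/
def decRun (a b : ℕ) : List ℕ := (List.range' b (a + 1 - b)).reverse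

/-- The index sequence `(i_1, …, i_N)`: for `m = 1, …, ⌊n/2⌋` (here `m` is 0-based, so
`m+1` is the 1-based block index), concatenate `n`, the run `n-2, …, 2(m+1)-1`, and the
run `n-1, …, 2(m+1)`. -/
def wordD (n : ℕ) : List ℕ :=
  ((List.range (n / 2)).map (fun m =>
    n :: (decRun (n - 2) (2 * m + 1) ++ decRun (n - 1) (2 * m + 2)))).flatten

/-- The matrix `x_i(t)` (index `i` is 1-based, matrix positions are 1-based in the paper,
0-based here). -/
def xMat (n : ℕ) (i : ℕ) (t : ℝ) : Matrix (Fin (2 * n)) (Fin (2 * n)) ℝ :=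
  Matrix.of fun p q =>
    (if (p : ℕ) = (q : ℕ) then 1 else 0) +
    (if i < n then
        (if (p : ℕ) + 1 = i ∧ (q : ℕ) + 1 = i + 1 then t else 0)
      + (if (p : ℕ) + 1 = n + i + 1 ∧ (q : ℕ) + 1 = n + i then -t else 0)
     else
        (if (p : ℕ) + 1 = n - 1 ∧ (q : ℕ) + 1 = 2 * n then t else 0)
      + (if (p : ℕ) + 1 = n ∧ (q : ℕ) + 1 = 2 * n - 1 then -t else 0))

/-- The product `x_{i_1}(t_1) ⋯ x_{i_N}(t_N)`; the parameter `t l` plays the role of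
`t_{l+1}`. -/
def prodX (n : ℕ) (t : ℕ → ℝ) : Matrix (Fin (2 * n)) (Fin (2 * n)) ℝ :=
  ((List.range (Npar n)).map (fun l => xMat n ((wordD n).getD l 0) (t l))).prod

/-- The first block `X₁(t)` of the first `n` rows of the product. -/
def X1 (n : ℕ) (t : ℕ → ℝ) : Matrix (Fin n) (Fin n) ℝ :=
  Matrix.of fun p q =>
    prodX n t ⟨(p : ℕ), by have := p.isLt; omega⟩ ⟨(q : ℕ), by have := q.isLt; omega⟩

/-- The second block `X₂(t)` of the first `n` rows of the product. -/
def X2 (n : ℕ) (t : ℕ → ℝ) : Matrix (Fin n) (Fin n) ℝ :=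
  Matrix.of fun p q =>
    prodX n t ⟨(p : ℕ), by have := p.isLt; omega⟩ ⟨n + (q : ℕ), by have := q.isLt; omega⟩

/-- The skew-symmetric matrix `A(t) = X₁(t)⁻¹ · X₂(t)`. -/
def Amat (n : ℕ) (t : ℕ → ℝ) : Matrix (Fin n) (Fin n) ℝ := (X1 n t)⁻¹ * X2 n t

/-- The set `S_n^{>0}` of totally positive skew-symmetric matrices. -/
def Spos (n : ℕ) : Set (Matrix (Fin n) (Fin n) ℝ) :=
  { A | ∃ t : ℕ → ℝ, (∀ i < Npar n, 0 < t i) ∧ A = Amat n t }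

/-- The signed minor `M_{j,k}(A)`: `(-1)^{jk}` times the determinant of the submatrix of `A`
with (1-based) rows `{1,…,n-k-1} ∪ {n-k+j,…,n}` and columns `{1,…,n-j}`. -/
def Mminor (n j k : ℕ) (A : Matrix (Fin n) (Fin n) ℝ) : ℝ :=
  (-1 : ℝ) ^ (j * k) *
    Matrix.det (Matrix.of fun (p q : Fin (n - j)) =>
      A (if (p : ℕ) < n - k - 1
          then ⟨(p : ℕ), by have := p.isLt; omega⟩
          else ⟨(p : ℕ) + j, by have := p.isLt; omega⟩)
        ⟨(q : ℕ), by have := q.isLt; omega⟩)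

/-- The Pfaffian of an `m × m` matrix (intended for `m` even):
`Pf(B) = (1/(2^{m/2} (m/2)!)) Σ_σ sgn(σ) Π_i B_{σ(2i-1), σ(2i)}`. -/
def Pfaff {m : ℕ} (B : Matrix (Fin m) (Fin m) ℝ) : ℝ :=
  (1 / ((2 : ℝ) ^ (m / 2) * (Nat.factorial (m / 2) : ℝ))) *
    ∑ σ : Equiv.Perm (Fin m), ((Equiv.Perm.sign σ : ℤ) : ℝ) *
      ∏ i : Fin (m / 2),
        B (σ ⟨2 * (i : ℕ), by have := i.isLt; omega⟩)
          (σ ⟨2 * (i : ℕ) + 1, by have := i.isLt; omega⟩)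

/-- `Pf_I(A)`: the Pfaffian of the submatrix of `A` with rows and columns indexed by `I`
in increasing order. -/
def PfI {n : ℕ} (A : Matrix (Fin n) (Fin n) ℝ) (I : Finset (Fin n)) : ℝ :=
  Pfaff (Matrix.of fun (p q : Fin I.card) =>
    A ((I.orderIsoOfFin rfl p : Fin n)) ((I.orderIsoOfFin rfl q : Fin n)))

/-- `sgn(I,[n]) = (-1)^{(Σ_{i∈I} i) - |I|(|I|+1)/2}` (the elements of `I` are 1-based, so a
0-based element `i` contributes `i+1`; the natural subtraction agrees with the integer one
since the sum of `|I|` distinct positive integers is at least `|I|(|I|+1)/2`). -/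
def sgnSet {n : ℕ} (I : Finset (Fin n)) : ℝ :=
  (-1 : ℝ) ^ ((∑ i ∈ I, ((i : ℕ) + 1)) - I.card * (I.card + 1) / 2)

/-- The block matrix `[Id_n | A]`. -/
def IdA {n : ℕ} (A : Matrix (Fin n) (Fin n) ℝ) : Matrix (Fin n) (Fin (2 * n)) ℝ :=
  Matrix.of fun p q =>
    if h : (q : ℕ) < n then (if (p : ℕ) = (q : ℕ) then 1 else 0)
    else A p ⟨(q : ℕ) - n, by have := q.isLt; omega⟩

/-- The full word `(j_1, …, j_{2N})`: `1, 2,1, 3,2,1, …, n-1,…,1` followed by `(i_1,…,i_N)`. -/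
def wordFull (n : ℕ) : List ℕ :=
  (((List.range n).map (fun r => decRun r 1)).flatten) ++ wordD n

/-- `z(ε) = x_{j_1}(ε) ⋯ x_{j_{2N}}(ε)`. -/
def zeps (n : ℕ) (ε : ℝ) : Matrix (Fin (2 * n)) (Fin (2 * n)) ℝ :=
  ((wordFull n).map (fun i => xMat n i ε)).prod

/-- `Z(ε) = z(ε)ᵀ · z(ε)`. -/
def Zeps (n : ℕ) (ε : ℝ) : Matrix (Fin (2 * n)) (Fin (2 * n)) ℝ :=
  (zeps n ε)ᵀ * zeps n ε

/-- First block `Y₁(ε)` of `[Id_n | A] · Z(ε)`. -/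
def Y1 {n : ℕ} (A : Matrix (Fin n) (Fin n) ℝ) (ε : ℝ) : Matrix (Fin n) (Fin n) ℝ :=
  Matrix.of fun p q => (IdA A * Zeps n ε) p ⟨(q : ℕ), by have := q.isLt; omega⟩

/-- Second block `Y₂(ε)` of `[Id_n | A] · Z(ε)`. -/
def Y2 {n : ℕ} (A : Matrix (Fin n) (Fin n) ℝ) (ε : ℝ) : Matrix (Fin n) (Fin n) ℝ :=
  Matrix.of fun p q => (IdA A * Zeps n ε) p ⟨n + (q : ℕ), by have := q.isLt; omega⟩

/-- The simple generators `s_i` of the Weyl group `W` of `SO(2n)`, as permutations of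
`{1,…,2n}` (0-based here): for `1 ≤ i ≤ n-1`, `s_i = (i,i+1)(n+i,n+i+1)`; for `i = n`,
`s_n = (n,2n-1)(n-1,2n)`. -/
def sGen (n : ℕ) (i : ℕ) : Equiv.Perm (Fin (2 * n)) :=
  if h : 1 ≤ i ∧ i ≤ n - 1 ∧ 2 ≤ n then
    Equiv.swap ⟨i - 1, by omega⟩ ⟨i, by omega⟩ *
      Equiv.swap ⟨n + i - 1, by omega⟩ ⟨n + i, by omega⟩
  else if h2 : i = n ∧ 2 ≤ n then
    Equiv.swap ⟨n - 1, by omega⟩ ⟨2 * n - 2, by omega⟩ *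
      Equiv.swap ⟨n - 2, by omega⟩ ⟨2 * n - 1, by omega⟩
  else 1

/-- Membership in the Weyl group `W`: `σ(n+i) ≡ n + σ(i) (mod 2n)` for all `1 ≤ i ≤ n`,
and the number of `i ∈ {1,…,n}` with `σ(i) > n` is even. (All positions are 0-based; a
0-based value `v` corresponds to the 1-based value `v+1`.) -/
def inW (n : ℕ) (σ : Equiv.Perm (Fin (2 * n))) : Prop :=
  (∀ i : Fin n,
    ((σ ⟨n + (i : ℕ), by have := i.isLt; omega⟩ : Fin (2 * n)) : ℕ)
      ≡ n + ((σ ⟨(i : ℕ), by have := i.isLt; omega⟩ : Fin (2 * n)) : ℕ) [MOD 2 * n]) ∧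
  Even (Finset.univ.filter (fun i : Fin n =>
    n ≤ ((σ ⟨(i : ℕ), by have := i.isLt; omega⟩ : Fin (2 * n)) : ℕ))).card

/-- `I_w = {i ∈ {1,…,n} : w(i) > n}`, as a finset of `Fin n` (0-based). -/
def Iset (n : ℕ) (σ : Equiv.Perm (Fin (2 * n))) : Finset (Fin n) :=
  Finset.univ.filter (fun i : Fin n =>
    n ≤ ((σ ⟨(i : ℕ), by have := i.isLt; omega⟩ : Fin (2 * n)) : ℕ))

/-- The parabolic subgroup `W_{[n-1]}` generated by `s_1, …, s_{n-1}`. -/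
def Wpar (n : ℕ) : Subgroup (Equiv.Perm (Fin (2 * n))) :=
  Subgroup.closure { σ | ∃ i, 1 ≤ i ∧ i ≤ n - 1 ∧ σ = sGen n i }

/-- The standard basis vector `e_i` of `ℝ^{2n}` (with `i : Fin n` 0-based, sitting in
position `i` of the first block). -/
def evec (n : ℕ) (i : Fin n) : Fin (2 * n) → ℝ :=
  Pi.single ⟨(i : ℕ), by have := i.isLt; omega⟩ 1

/-- The standard basis vector `f_j` of `ℝ^{2n}` (position `n + j`). -/
def fvec (n : ℕ) (j : Fin n) : Fin (2 * n) → ℝ :=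
  Pi.single ⟨n + (j : ℕ), by have := j.isLt; omega⟩ 1

/-- `f = ι(f_1)⋯ι(f_n)` in the Clifford algebra. -/
def fElt {n : ℕ} (Q : QuadraticForm ℝ (Fin (2 * n) → ℝ)) : CliffordAlgebra Q :=
  (List.ofFn (fun j : Fin n => CliffordAlgebra.ι Q (fvec n j))).prod

/-- `e_S = ι(e_{l_1})⋯ι(e_{l_s})` where `l_1 < ⋯ < l_s` enumerates `S`. -/
def eProd {n : ℕ} (Q : QuadraticForm ℝ (Fin (2 * n) → ℝ)) (S : Finset (Fin n)) :
    CliffordAlgebra Q :=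
  ((S.sort (· ≤ ·)).map (fun l => CliffordAlgebra.ι Q (evec n l))).prod

/-- `h = Π_{i=1}^n ι(e_i + Σ_j A_{ij} f_j)` (product in increasing order of `i`). -/
def hElt {n : ℕ} (Q : QuadraticForm ℝ (Fin (2 * n) → ℝ)) (A : Matrix (Fin n) (Fin n) ℝ) :
    CliffordAlgebra Q :=
  (List.ofFn (fun i : Fin n =>
    CliffordAlgebra.ι Q (evec n i + ∑ j : Fin n, A i j • fvec n j))).prod

/-- The sorted list of the (1-based) elements of `S ⊆ {1,…,n}`. -/
def valsOf {n : ℕ} (S : Finset (Fin n)) : List ℕ :=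
  (S.sort (· ≤ ·)).map (fun i => (i : ℕ) + 1)

/-- The word `w_1 w_2 ⋯ w_r` where
`w_m = s_n (s_{n-2}⋯s_{i_{2m-1}}) (s_{n-1}⋯s_{i_{2m}})` and `vals` lists `i_1 < i_2 < ⋯`
(1-based); `m` is 0-based here. -/
def uWord (n r : ℕ) (vals : List ℕ) : List ℕ :=
  ((List.range r).map (fun m =>
    n :: (decRun (n - 2) (vals.getD (2 * m) 0) ++ decRun (n - 1) (vals.getD (2 * m + 1) 0)))).flatten

/-- The permutation `u = w_1 w_2 ⋯ w_r`. -/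
def uPerm (n r : ℕ) (vals : List ℕ) : Equiv.Perm (Fin (2 * n)) :=
  ((uWord n r vals).map (sGen n)).prod

/-- `L = r + Σ_{m=1}^{r} ((n-1-i_{2m-1}) + (n-i_{2m}))`. -/
def Lval (n r : ℕ) (vals : List ℕ) : ℕ :=
  r + ∑ m ∈ Finset.range r, ((n - 1 - vals.getD (2 * m) 0) + (n - vals.getD (2 * m + 1) 0))

/-!
In the splitting `ℝⁿ ⊕ ℝⁿ` every product of the matrices `x_i(t)` is a block matrix with first block
row `P · [1 | A]`. Left multiplication by `x_i(t)`, `i < n`, changes `P` only, by a bidiagonal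
factor, while `x_n(t)` adds to `P A Pᵀ` a multiple of the bivector `e_{n-1} ∧ e_n`.

Conversely, removing two rows and columns of `A` by a Schur complement subtracts the bivector of two
columns of `A`. If the Schur complement has been factored with some `P`, then the nonvanishing
minors of `A` say that the images under `P` of these two columns have nonzero entries and nonzero
consecutive `2 × 2` minors. Hence two decreasing runs of bidiagonal factors, all with nonzero
parameters, carry the two columns into the span of `e_{n-1}` and `e_n`, and the bivector becomes one
factor `x_n(t)`. These are the factors of one block of the word.
-/

section BlockMatrices

variable {ι R : Type*} [Fintype ι] [DecidableEq ι] [CommRing R]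

/-- The block matrix with first block row `P · [1 | A]`; for alternating `A` and invertible `P` it
lies in the parabolic subgroup of the split orthogonal group. For singular `P` the inverse takes
the junk value `0`. -/
def parabolicBlock (P A : Matrix ι ι R) : Matrix (ι ⊕ ι) (ι ⊕ ι) R :=
  fromBlocks P (P * A) 0 P⁻¹ᵀ

lemma parabolicBlock_one_zero : parabolicBlock (1 : Matrix ι ι R) 0 = 1 := by
  simp [parabolicBlock]

lemma parabolicBlock_mul {P Q : Matrix ι ι R} (A B : Matrix ι ι R) (hQ : IsUnit Q.det) :
    parabolicBlock P A * parabolicBlock Q B =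
      parabolicBlock (P * Q) (B + Q⁻¹ * A * Q⁻¹ᵀ) := by
  have upper_right : P * (Q * B) + P * A * Q⁻¹ᵀ = P * Q * (B + Q⁻¹ * A * Q⁻¹ᵀ) := by
    simp only [mul_add, Matrix.mul_assoc, mul_nonsing_inv_cancel_left Q _ hQ]
  simp [parabolicBlock, fromBlocks_multiply, upper_right, Matrix.mul_inv_rev, transpose_mul]

end BlockMatrices

section Wedge

variable {ι R : Type*} [CommRing R]

/-- The bivector `u ∧ v`, as the alternating matrix `u vᵀ - v uᵀ`. -/
def wedge (u v : ι → R) : Matrix ι ι R := vecMulVec u v - vecMulVec v u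

lemma wedge_apply (u v : ι → R) (i j : ι) : wedge u v i j = u i * v j - v i * u j := rfl

lemma mul_wedge [Fintype ι] (P : Matrix ι ι R) (u v : ι → R) :
    P * wedge u v = vecMulVec (P *ᵥ u) v - vecMulVec (P *ᵥ v) u := by
  rw [wedge, Matrix.mul_sub, mul_vecMulVec, mul_vecMulVec]

lemma mul_wedge_mul_transpose [Fintype ι] (P : Matrix ι ι R) (u v : ι → R) :
    P * wedge u v * Pᵀ = wedge (P *ᵥ u) (P *ᵥ v) := by
  rw [mul_wedge, Matrix.sub_mul, vecMulVec_mul, vecMulVec_mul, vecMul_transpose, vecMul_transpose,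
    wedge]

lemma wedge_single_add_single [DecidableEq ι] (p q : ι) (α β γ : R) :
    wedge (Pi.single q α) (Pi.single p β + Pi.single q γ) =
      -(α * β) • wedge (Pi.single p 1) (Pi.single q 1) := by
  ext i j
  simp only [wedge_apply, Matrix.smul_apply, smul_eq_mul, Pi.add_apply, Pi.single_apply]
  split_ifs <;> ring

end Wedge

section SchurComplement

/-- Alternating matrices. Skew-symmetry implies the condition on the diagonal only when `2` is
invertible or, more generally, not a zero divisor. -/
structure IsAlternating {ι R : Type*} [CommRing R] (A : Matrix ι ι R) : Prop where
  apply_swap : ∀ i j, A j i = -A i j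
  diag : ∀ i, A i i = 0

lemma isAlternating_of_transpose_eq_neg {ι R : Type*} [CommRing R] [NoZeroDivisors R] [CharZero R]
    {A : Matrix ι ι R} (hA : Aᵀ = -A) : IsAlternating A where
  apply_swap i j := congrFun (congrFun hA i) j
  diag i := self_eq_neg.mp (congrFun (congrFun hA i) i)

variable {ι K : Type*} [Field K] {A : Matrix ι ι K} {S T : ι}

/-- The Schur complement of the principal `{S, T}`-block of an alternating matrix `A`, padded with
zeros to the size of `A`. -/
def schurComplement (A : Matrix ι ι K) (S T : ι) : Matrix ι ι K :=
  A - (A S T)⁻¹ • wedge (A.col S) (A.col T)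

lemma schurComplement_apply (A : Matrix ι ι K) (S T i j : ι) :
    schurComplement A S T i j = A i j - (A S T)⁻¹ * (A i S * A j T - A i T * A j S) := rfl

lemma isAlternating_schurComplement (hA : IsAlternating A) :
    IsAlternating (schurComplement A S T) where
  apply_swap i j := by
    rw [schurComplement_apply, schurComplement_apply, hA.apply_swap i j]
    ring
  diag i := by
    rw [schurComplement_apply, hA.diag]
    ring

lemma IsAlternating.schurComplement_left_eq_zero (hA : IsAlternating A) (hST : A S T ≠ 0) :
    schurComplement A S T S = 0 := by
  ext j
  rw [schurComplement_apply, hA.diag, hA.apply_swap S j, Pi.zero_apply]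
  field_simp
  ring

lemma IsAlternating.schurComplement_right_eq_zero (hA : IsAlternating A) (hST : A S T ≠ 0) :
    schurComplement A S T T = 0 := by
  ext j
  rw [schurComplement_apply, hA.diag, hA.apply_swap T j, hA.apply_swap S T, Pi.zero_apply]
  field_simp
  ring

lemma schurComplement_eq_zero_of_row_eq_zero {i : ι} (hi : A i = 0) :
    schurComplement A S T i = 0 := by
  ext j
  simp [schurComplement_apply, hi]

variable [Fintype ι] [DecidableEq ι]

/-- Multiplying a row vector by the Schur complement amounts to correcting its entries at `S` and
`T` so that it annihilates the columns `S` and `T` of `A`, and then multiplying it by `A`. -/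
lemma IsAlternating.vecMul_schurComplement (hA : IsAlternating A) (c : ι → K) :
    c ᵥ* schurComplement A S T =
      (c + Pi.single S (-(A S T)⁻¹ * (c ᵥ* A) T) + Pi.single T ((A S T)⁻¹ * (c ᵥ* A) S)) ᵥ* A := by
  ext j
  have vecMul_col : ∀ i, c ⬝ᵥ A.col i = (c ᵥ* A) i := fun _ => rfl
  simp only [schurComplement, wedge, vecMul_sub, vecMul_smul, vecMul_vecMulVec, add_vecMul,
    single_vecMul, vecMul_col, Pi.sub_apply, Pi.add_apply, Pi.smul_apply, smul_eq_mul,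
    col_apply, row_apply, hA.apply_swap _ j]
  ring

end SchurComplement

section Bidiagonal

variable {n : ℕ} {R : Type*} [CommRing R]

/-- The upper unitriangular matrix whose only other nonzero entries are on the superdiagonal. The
entry in column `i` (counted from `0`) is `f i`, so that `f i` is the parameter of the one-parameter
subgroup `x_i`. -/
def bidiagonal (n : ℕ) (f : ℕ → R) : Matrix (Fin n) (Fin n) R :=
  of fun p q => if p = q then 1 else if (p : ℕ) + 1 = q then f q else 0

lemma bidiagonal_apply (f : ℕ → R) (p q : Fin n) :
    bidiagonal n f p q = if p = q then 1 else if (p : ℕ) + 1 = q then f q else 0 := rfl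

lemma bidiagonal_zero : bidiagonal n (0 : ℕ → R) = 1 := by
  ext p q
  simp [bidiagonal_apply, one_apply]

lemma bidiagonal_row_of_val_eq_add_one (f : ℕ → R) {p q : Fin n} (hpq : (q : ℕ) = p + 1) :
    bidiagonal n f p = Pi.single p 1 + Pi.single q (f q) := by
  ext k
  simp only [bidiagonal_apply, Pi.add_apply, Pi.single_apply]
  grind

lemma bidiagonal_row_last (f : ℕ → R) {p : Fin n} (hp : (p : ℕ) + 1 = n) :
    bidiagonal n f p = Pi.single p 1 := by
  ext k
  simp only [bidiagonal_apply, Pi.single_apply]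
  grind

lemma bidiagonal_mulVec_of_val_eq_add_one (f : ℕ → R) (v : Fin n → R) {p q : Fin n}
    (hpq : (q : ℕ) = p + 1) : (bidiagonal n f *ᵥ v) p = v p + f q * v q := by
  change bidiagonal n f p ⬝ᵥ v = _
  rw [bidiagonal_row_of_val_eq_add_one f hpq, add_dotProduct, single_one_dotProduct,
    single_dotProduct]

lemma bidiagonal_mulVec_last (f : ℕ → R) (v : Fin n → R) {p : Fin n} (hp : (p : ℕ) + 1 = n) :
    (bidiagonal n f *ᵥ v) p = v p := by
  simp [mulVec, bidiagonal_row_last f hp]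

lemma bidiagonal_mulVec_of_apply_eq_zero {f : ℕ → R} (v : Fin n → R) {p : Fin n}
    (hf : f (p + 1) = 0) : (bidiagonal n f *ᵥ v) p = v p := by
  rcases (Nat.succ_le_of_lt p.isLt).lt_or_eq with hp | hp
  · rw [bidiagonal_mulVec_of_val_eq_add_one f v (q := ⟨p + 1, hp⟩) rfl, hf, zero_mul, add_zero]
  · exact bidiagonal_mulVec_last f v hp

lemma bidiagonal_mul_bidiagonal {f g : ℕ → R} (hfg : ∀ i, f i * g (i + 1) = 0) :
    bidiagonal n f * bidiagonal n g = bidiagonal n (f + g) := by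
  ext p k
  change (bidiagonal n f *ᵥ (bidiagonal n g).col k) p = _
  rcases (Nat.succ_le_of_lt p.isLt).lt_or_eq with hp | hp
  · rw [bidiagonal_mulVec_of_val_eq_add_one f _ (q := ⟨p + 1, hp⟩) rfl]
    have := hfg (p + 1)
    simp only [col_apply, bidiagonal_apply, Pi.add_apply]
    grind
  · rw [bidiagonal_mulVec_last f _ hp, col_apply, bidiagonal_row_last g hp,
      bidiagonal_row_last (f + g) hp]

lemma isUpperTriangular_bidiagonal (f : ℕ → R) : (bidiagonal n f).IsUpperTriangular := by
  intro p q (hqp : q < p)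
  rw [bidiagonal_apply, if_neg hqp.ne', if_neg (by omega)]

lemma det_bidiagonal (f : ℕ → R) : (bidiagonal n f).det = 1 := by
  rw [det_of_isUpperTriangular (isUpperTriangular_bidiagonal f)]
  simp [bidiagonal_apply]

lemma inv_bidiagonal_single (i : ℕ) (t : R) :
    (bidiagonal n (Pi.single i t))⁻¹ = bidiagonal n (Pi.single i (-t)) := by
  refine inv_eq_right_inv ?_
  rw [bidiagonal_mul_bidiagonal, ← Pi.single_add, add_neg_cancel, Pi.single_zero, bidiagonal_zero]
  intro k
  simp only [Pi.single_apply]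
  grind

lemma bidiagonal_mulVec_single (f : ℕ → R) {q : Fin n} (hf : f q = 0) (α : R) :
    bidiagonal n f *ᵥ Pi.single q α = Pi.single q α := by
  ext p
  simp only [mulVec_single, Pi.smul_apply, col_apply, bidiagonal_apply, Pi.single_apply]
  split_ifs <;> simp [hf]

end Bidiagonal

section Elimination

variable {n : ℕ} {K : Type*} [Field K]

lemma exists_bidiagonal_mulVec_eq_zero {b : ℕ} (hb : 1 ≤ b) {q : Fin n} {v : Fin n → K}
    (v_eq_zero : ∀ p : Fin n, (p : ℕ) + 1 < b → v p = 0)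
    (v_ne_zero : ∀ p ≤ q, b ≤ (p : ℕ) + 1 → v p ≠ 0) :
    ∃ f : ℕ → K, Function.support f = Set.Icc b (q : ℕ) ∧
      (∀ p < q, (bidiagonal n f *ᵥ v) p = 0) ∧ ∀ p ≥ q, (bidiagonal n f *ᵥ v) p = v p := by
  set w : ℕ → K := Function.extend Fin.val v 0
  have hw : ∀ p : Fin n, w p = v p := fun p => Fin.val_injective.extend_apply v 0 p
  have w_ne_zero : ∀ i ≤ (q : ℕ), b ≤ i + 1 → w i ≠ 0 := fun i hi hbi => by
    rw [← Fin.val_mk (hi.trans_lt q.isLt), hw]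
    exact v_ne_zero _ hi hbi
  set f : ℕ → K := Set.indicator (Set.Icc b q) fun i => -w (i - 1) / w i
  refine ⟨f, ?_, fun p hpq => ?_, fun p hqp => ?_⟩
  · rw [Set.support_indicator, Set.inter_eq_left]
    rintro i ⟨hbi, hiq⟩
    exact div_ne_zero (neg_ne_zero.mpr (w_ne_zero _ (by omega) (by omega)))
      (w_ne_zero _ hiq (by omega))
  · have hr : ((⟨p + 1, by omega⟩ : Fin n) : ℕ) = p + 1 := rfl
    rw [bidiagonal_mulVec_of_val_eq_add_one f v hr, ← hw, ← hw, hr]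
    rcases lt_or_ge ((p : ℕ) + 1) b with hpb | hbp
    · simp [f, hw, v_eq_zero p hpb, hpb.not_ge]
    · have hmem : (p : ℕ) + 1 ∈ Set.Icc b (q : ℕ) := ⟨hbp, hpq⟩
      have := w_ne_zero (p + 1) hpq (by omega)
      simp only [f, Set.indicator_of_mem hmem, Nat.add_sub_cancel]
      field_simp
      ring
  · refine bidiagonal_mulVec_of_apply_eq_zero v (Set.indicator_of_notMem ?_ _)
    rw [Set.mem_Icc]
    omega

lemma exists_bidiagonal_mulVec_eq_single {b : ℕ} (hb : 1 ≤ b) {q : Fin n} (hq : (q : ℕ) + 1 = n)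
    {v : Fin n → K} (v_eq_zero : ∀ p : Fin n, (p : ℕ) + 1 < b → v p = 0)
    (v_ne_zero : ∀ p : Fin n, b ≤ (p : ℕ) + 1 → v p ≠ 0) :
    ∃ f : ℕ → K, Function.support f = Set.Icc b (n - 1) ∧
      bidiagonal n f *ᵥ v = Pi.single q (v q) := by
  obtain ⟨f, support_f, fv_eq_zero, fv_eq⟩ :=
    exists_bidiagonal_mulVec_eq_zero (q := q) hb v_eq_zero fun p _ => v_ne_zero p
  refine ⟨f, by rw [support_f, Nat.eq_sub_of_add_eq hq], funext fun p => ?_⟩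
  rcases lt_or_ge p q with hp | hp
  · rw [fv_eq_zero p hp, Pi.single_eq_of_ne hp.ne]
  · obtain rfl : p = q := by omega
    rw [fv_eq p le_rfl, Pi.single_eq_same]

lemma exists_bidiagonal_mulVec_eq_single_add_single {b : ℕ} (hb : 1 ≤ b) {p q : Fin n}
    (hp : (p : ℕ) + 2 = n) (hq : (q : ℕ) + 1 = n) {v : Fin n → K}
    (v_eq_zero : ∀ k : Fin n, (k : ℕ) + 1 < b → v k = 0)
    (v_ne_zero : ∀ k ≤ p, b ≤ (k : ℕ) + 1 → v k ≠ 0) :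
    ∃ f : ℕ → K, Function.support f = Set.Icc b (n - 2) ∧
      bidiagonal n f *ᵥ v = Pi.single p (v p) + Pi.single q (v q) := by
  obtain ⟨f, support_f, fv_eq_zero, fv_eq⟩ :=
    exists_bidiagonal_mulVec_eq_zero hb v_eq_zero v_ne_zero
  refine ⟨f, by rw [support_f, Nat.eq_sub_of_add_eq hp], funext fun k => ?_⟩
  rcases lt_or_ge k p with hk | hk
  · simp [fv_eq_zero k hk, hk.ne, show k ≠ q by omega]
  · rw [fv_eq k hk]
    obtain rfl | rfl : k = p ∨ k = q := by omega
    · simp [show k ≠ q by omega]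
    · simp [show k ≠ p by omega]

lemma bidiagonal_mulVec_mul_of_mulVec_eq_zero {g : ℕ → K} {x : Fin n → K} (y : Fin n → K)
    {k l : Fin n} (hkl : (l : ℕ) = k + 1) (hx : (bidiagonal n g *ᵥ x) k = 0) :
    (bidiagonal n g *ᵥ y) k * x l = y k * x l - x k * y l := by
  rw [bidiagonal_mulVec_of_val_eq_add_one g _ hkl] at hx ⊢
  linear_combination y l * hx

/-- First clear `x` above its last entry; the nonvanishing of the `2 × 2` minors of `(x, y)` then
says that the image of `y` has nonzero entries, so it can be cleared above its last two. -/
lemma exists_bidiagonal_mulVec_pair_eq_single {s : ℕ} {p q : Fin n} (hp : (p : ℕ) + 2 = n)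
    (hq : (q : ℕ) + 1 = n) (hsp : s ≤ p) {x y : Fin n → K}
    (x_eq_zero : ∀ k : Fin n, (k : ℕ) ≤ s → x k = 0)
    (y_eq_zero : ∀ k : Fin n, (k : ℕ) < s → y k = 0)
    (x_ne_zero : ∀ k : Fin n, s < k → x k ≠ 0)
    (minor_ne_zero : ∀ k l : Fin n, s ≤ k → (l : ℕ) = k + 1 → y k * x l - x k * y l ≠ 0) :
    ∃ f g : ℕ → K, Function.support f = Set.Icc (s + 1) (n - 2) ∧
      Function.support g = Set.Icc (s + 2) (n - 1) ∧ ∃ α β γ : K, α ≠ 0 ∧ β ≠ 0 ∧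
        bidiagonal n f *ᵥ (bidiagonal n g *ᵥ x) = Pi.single q α ∧
        bidiagonal n f *ᵥ (bidiagonal n g *ᵥ y) = Pi.single p β + Pi.single q γ := by
  obtain ⟨g, support_g, gx⟩ := exists_bidiagonal_mulVec_eq_single (b := s + 2) (by omega) hq
    (fun k hk => x_eq_zero k (by omega)) (fun k hk => x_ne_zero k (by omega))
  set z := bidiagonal n g *ᵥ y with hz
  have z_ne_zero : ∀ k ≤ p, s + 1 ≤ (k : ℕ) + 1 → z k ≠ 0 := by
    intro k hkp hsk hzk
    have gx_k : (bidiagonal n g *ᵥ x) k = 0 := by rw [gx, Pi.single_eq_of_ne (by omega)]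
    refine minor_ne_zero k ⟨k + 1, by omega⟩ (by omega) rfl ?_
    rw [← bidiagonal_mulVec_mul_of_mulVec_eq_zero y rfl gx_k, ← hz, hzk, zero_mul]
  have z_eq_zero : ∀ k : Fin n, (k : ℕ) + 1 < s + 1 → z k = 0 := by
    intro k hk
    have hg : g (k + 1) = 0 := by
      rw [← Function.notMem_support, support_g]
      rw [Set.mem_Icc]
      omega
    rw [hz, bidiagonal_mulVec_of_apply_eq_zero y hg, y_eq_zero k (by omega)]
  obtain ⟨f, support_f, fz⟩ :=
    exists_bidiagonal_mulVec_eq_single_add_single (by omega) hp hq z_eq_zero z_ne_zero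
  have hfq : f q = 0 := by
    rw [← Function.notMem_support, support_f]
    rw [Set.mem_Icc]
    omega
  exact ⟨f, g, support_f, support_g, x q, z p, z q, x_ne_zero q (by omega),
    z_ne_zero p le_rfl (by omega), by rw [gx, bidiagonal_mulVec_single f hfq], fz⟩

end Elimination

section Triangularity

variable {n s : ℕ} {K : Type*} [Field K]

/-- Upper unitriangular matrices whose first `s` rows are those of the identity. -/
structure IsUnitriangularFrom (s : ℕ) (P : Matrix (Fin n) (Fin n) K) : Prop where
  isUpperTriangular : P.IsUpperTriangular
  diag : ∀ i, P i i = 1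
  row_of_lt : ∀ i : Fin n, (i : ℕ) < s → P i = (1 : Matrix (Fin n) (Fin n) K) i

lemma isUnitriangularFrom_one : IsUnitriangularFrom s (1 : Matrix (Fin n) (Fin n) K) :=
  ⟨blockTriangular_one, one_apply_eq, fun _ _ => rfl⟩

namespace IsUnitriangularFrom

variable {P : Matrix (Fin n) (Fin n) K}

lemma mono {s' : ℕ} (hP : IsUnitriangularFrom s P) (hs : s' ≤ s) : IsUnitriangularFrom s' P :=
  ⟨hP.isUpperTriangular, hP.diag, fun i hi => hP.row_of_lt i (hi.trans_le hs)⟩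

lemma isUnit_det (hP : IsUnitriangularFrom s P) : IsUnit P.det := by
  simp [det_of_isUpperTriangular hP.isUpperTriangular, hP.diag]

lemma mulVec_apply_of_lt (hP : IsUnitriangularFrom s P) (v : Fin n → K) {i : Fin n}
    (hi : (i : ℕ) < s) : (P *ᵥ v) i = v i := by
  change P i ⬝ᵥ v = v i
  rw [hP.row_of_lt i hi]
  exact congrFun (one_mulVec v) i

lemma bidiagonal_mul (hP : IsUnitriangularFrom s P) {f : ℕ → K} (hf : ∀ i ≤ s, f i = 0) :
    IsUnitriangularFrom s (bidiagonal n f * P) where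
  isUpperTriangular := (isUpperTriangular_bidiagonal f).mul hP.isUpperTriangular
  diag i := by
    change (bidiagonal n f *ᵥ P.col i) i = 1
    rcases (Nat.succ_le_of_lt i.isLt).lt_or_eq with hi | hi
    · have below_diag : P ⟨i + 1, hi⟩ i = 0 :=
        hP.isUpperTriangular (show i < ⟨i + 1, hi⟩ from Nat.lt_succ_self i)
      rw [bidiagonal_mulVec_of_val_eq_add_one f _ (q := ⟨i + 1, hi⟩) rfl, col_apply, col_apply,
        hP.diag, below_diag, mul_zero, add_zero]
    · rw [bidiagonal_mulVec_last f _ hi, col_apply, hP.diag]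
  row_of_lt i hi := by
    rw [← hP.row_of_lt i hi]
    exact funext fun j => bidiagonal_mulVec_of_apply_eq_zero (P.col j) (hf (i + 1) hi)

end IsUnitriangularFrom

/-- The shape of `P * A` after elimination: the entries vanish up to the antidiagonal
`i + j = n + s - 2`. -/
def IsAntitriangularFrom (s : ℕ) (B : Matrix (Fin n) (Fin n) K) : Prop :=
  ∀ i j : Fin n, (i : ℕ) + j + 2 ≤ n + s → B i j = 0

lemma IsAntitriangularFrom.bidiagonal_mul {B : Matrix (Fin n) (Fin n) K}
    (hB : IsAntitriangularFrom (s + 1) B) (f : ℕ → K) :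
    IsAntitriangularFrom s (bidiagonal n f * B) := by
  intro i j hij
  change (bidiagonal n f *ᵥ B.col j) i = 0
  rcases (Nat.succ_le_of_lt i.isLt).lt_or_eq with hi | hi
  · rw [bidiagonal_mulVec_of_val_eq_add_one f _ (q := ⟨i + 1, hi⟩) rfl, col_apply, col_apply,
      hB i j (by omega), hB ⟨i + 1, hi⟩ j (by simp only; omega), mul_zero, add_zero]
  · rw [bidiagonal_mulVec_last f _ hi, col_apply, hB i j (by omega)]

end Triangularity

section Genericity

variable {n s : ℕ} {K : Type*} [Field K] {A : Matrix (Fin n) (Fin n) K}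

/-- Alternating matrices supported on the indices `≥ s` on which all steps of the elimination from
stage `s` on succeed. The nonvanishing of the minor of `A` with rows `{s, …, a - 1} ∪ {i, …, n - 1}`
and columns `{s, …, n - 1 - (i - a)}` is expressed as the triviality of the left kernel, a form
which is stable under Schur complements. -/
structure IsGenericFrom (s : ℕ) (A : Matrix (Fin n) (Fin n) K) : Prop extends IsAlternating A where
  row_eq_zero : ∀ i : Fin n, (i : ℕ) < s → A i = 0
  eq_zero_of_vecMul_eq_zero : ∀ a i : ℕ, s ≤ a → a < i → i < n → ∀ c : Fin n → K,
    (∀ r : Fin n, c r ≠ 0 → s ≤ r ∧ r < a ∨ i ≤ r) →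
    (∀ j : Fin n, j + i < a + n → (c ᵥ* A) j = 0) → c = 0

variable {S T : Fin n}

namespace IsGenericFrom

lemma apply_eq_zero_of_lt (hA : IsGenericFrom s A) (i : Fin n) {j : Fin n} (hj : (j : ℕ) < s) :
    A i j = 0 := by
  rw [hA.apply_swap j i, hA.row_eq_zero j hj, Pi.zero_apply, neg_zero]

lemma apply_ne_zero (hST : (T : ℕ) = S + 1) (hA : IsGenericFrom S A) : A S T ≠ 0 := by
  intro hzero
  rcases (show (S : ℕ) + 2 ≤ n by omega).lt_or_eq with hn | hn
  · have single_eq_zero := hA.eq_zero_of_vecMul_eq_zero (S + 1) (n - 1) (by omega) (by omega)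
      (by omega) (Pi.single S 1) (fun r hr => by grind) fun j hj => by
        rw [single_one_vecMul, row_apply]
        rcases lt_trichotomy (j : ℕ) S with hjS | hjS | hjS
        · exact hA.apply_eq_zero_of_lt S hjS
        · rw [Fin.ext hjS, hA.diag]
        · rwa [show j = T by omega]
    simp at single_eq_zero
  · have single_eq_zero := hA.eq_zero_of_vecMul_eq_zero S (S + 1) le_rfl (by omega)
      (by omega) (Pi.single T 1) (fun r hr => by grind) fun j hj => by
        rw [single_one_vecMul, row_apply]
        rcases (show (j : ℕ) ≤ S by omega).lt_or_eq with hjS | hjS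
        · exact hA.apply_eq_zero_of_lt T hjS
        · rw [Fin.ext hjS, hA.apply_swap, hzero, neg_zero]
    simp at single_eq_zero

end IsGenericFrom

lemma isGenericFrom_schurComplement (hST : (T : ℕ) = S + 1) (hA : IsGenericFrom S A) :
    IsGenericFrom (S + 2) (schurComplement A S T) where
  toIsAlternating := isAlternating_schurComplement hA.toIsAlternating
  row_eq_zero i hi := by
    rcases lt_or_ge (i : ℕ) S with hiS | hiS
    · exact schurComplement_eq_zero_of_row_eq_zero (hA.row_eq_zero i hiS)
    · obtain rfl | rfl : i = S ∨ i = T := by omega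
      · exact hA.schurComplement_left_eq_zero (hA.apply_ne_zero hST)
      · exact hA.schurComplement_right_eq_zero (hA.apply_ne_zero hST)
  eq_zero_of_vecMul_eq_zero a i ha hai hin c support_c hc := by
    rw [hA.vecMul_schurComplement] at hc
    have apply_of_ne (u v : K) (r : Fin n) (hrS : r ≠ S) (hrT : r ≠ T) :
        (c + Pi.single S u + Pi.single T v : Fin n → K) r = c r := by simp [hrS, hrT]
    have corrected_eq_zero :=
      hA.eq_zero_of_vecMul_eq_zero a i (by omega) hai hin _ (by grind) hc
    ext r
    by_cases hr : (S : ℕ) + 2 ≤ r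
    · rw [← apply_of_ne _ _ r (by omega) (by omega), corrected_eq_zero]
    · by_contra hcr
      have := support_c r hcr
      omega

end Genericity

section EliminationStep

variable {n : ℕ} {K : Type*} [Field K] {A P : Matrix (Fin n) (Fin n) K} {S T : Fin n}

namespace IsGenericFrom

lemma mulVec_col_ne_zero (hST : (T : ℕ) = S + 1) (hA : IsGenericFrom S A)
    (hP : IsUnitriangularFrom (S + 2) P)
    (hPA : IsAntitriangularFrom (S + 2) (P * schurComplement A S T)) {i : Fin n}
    (hi : S < i) : (P *ᵥ A.col S) i ≠ 0 := by
  have hAST := hA.apply_ne_zero hST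
  rcases (show (S : ℕ) + 1 ≤ i by omega).eq_or_lt with hiT | hiT
  · obtain rfl : i = T := by omega
    rwa [hP.mulVec_apply_of_lt _ (by omega), col_apply, hA.apply_swap, neg_ne_zero]
  · intro hzero
    have row_mul := hA.vecMul_schurComplement (S := S) (T := T) (P i)
    rw [show (P i ᵥ* A) S = 0 from hzero, mul_zero, Pi.single_zero, add_zero] at row_mul
    have corrected_eq_zero := hA.eq_zero_of_vecMul_eq_zero (S + 1) i (by omega) hiT i.isLt _
      (fun r hr => ?_) fun j hj => by
        rw [← row_mul]
        exact hPA i j (by omega)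
    · have := congrFun corrected_eq_zero i
      simp [hP.diag, hi.ne'] at this
    · by_contra hr'
      have hri : r < i := by omega
      have hrS : r ≠ S := by omega
      simp [hP.isUpperTriangular hri, hrS] at hr

lemma minor_mulVec_col_ne_zero (hST : (T : ℕ) = S + 1) (hA : IsGenericFrom S A)
    (hP : IsUnitriangularFrom (S + 2) P)
    (hPA : IsAntitriangularFrom (S + 2) (P * schurComplement A S T)) {k l : Fin n}
    (hSk : S ≤ k) (hkl : (l : ℕ) = k + 1) :
    (P *ᵥ A.col T) k * (P *ᵥ A.col S) l - (P *ᵥ A.col S) k * (P *ᵥ A.col T) l ≠ 0 := by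
  have hxl := hA.mulVec_col_ne_zero hST hP hPA (show S < l by omega)
  rcases hSk.eq_or_lt with rfl | hSk
  · rw [hP.mulVec_apply_of_lt _ (by omega), hP.mulVec_apply_of_lt (A.col S) (i := S) (by omega),
      col_apply, col_apply, hA.diag, zero_mul, sub_zero]
    exact mul_ne_zero (hA.apply_ne_zero hST) hxl
  · intro hzero
    set x := P *ᵥ A.col S
    set c : Fin n → K := x l • P k - x k • P l with hc
    have c_mul : ∀ B : Matrix (Fin n) (Fin n) K, c ᵥ* B = x l • (P * B) k - x k • (P * B) l :=
      fun B => by rw [hc, sub_vecMul, smul_vecMul, smul_vecMul]; rfl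
    have c_mul_S : (c ᵥ* A) S = 0 := by
      rw [c_mul]
      exact sub_eq_zero.mpr (mul_comm _ _)
    have c_mul_T : (c ᵥ* A) T = 0 := by
      rw [c_mul, ← hzero, mul_comm ((P *ᵥ A.col T) k)]
      rfl
    have c_mul_A := hA.vecMul_schurComplement (S := S) (T := T) c
    rw [c_mul_S, c_mul_T, mul_zero, mul_zero, Pi.single_zero, Pi.single_zero, add_zero, add_zero]
      at c_mul_A
    have hPlk : P l k = 0 := hP.isUpperTriangular (show k < l by omega)
    have c_eq_zero := hA.eq_zero_of_vecMul_eq_zero S k le_rfl hSk k.isLt c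
      (fun r hr => ?_) fun j hj => by
        rw [← c_mul_A, c_mul, Pi.sub_apply, Pi.smul_apply, Pi.smul_apply, hPA k j (by omega),
          hPA l j (by omega), smul_zero, smul_zero, sub_zero]
    · have := congrFun c_eq_zero k
      simp [hc, hP.diag, hPlk, hxl] at this
    · by_contra hr'
      have hrk : r < k := by omega
      have hrl : r < l := by omega
      simp [hc, hP.isUpperTriangular hrk, hP.isUpperTriangular hrl] at hr

lemma isAntitriangularFrom_mul (hST : (T : ℕ) = S + 1) (hA : IsGenericFrom S A) {p q : Fin n}
    (hp : (p : ℕ) + 2 = n) (hq : (q : ℕ) + 1 = n) {α β γ : K}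
    (mulVec_S : P *ᵥ A.col S = Pi.single q α)
    (mulVec_T : P *ᵥ A.col T = Pi.single p β + Pi.single q γ)
    (hPA : IsAntitriangularFrom S (P * schurComplement A S T)) :
    IsAntitriangularFrom S (P * A) := by
  intro i j hij
  have schur_eq_zero := hPA i j hij
  rw [schurComplement, Matrix.mul_sub, Matrix.mul_smul, mul_wedge, mulVec_S,
    mulVec_T] at schur_eq_zero
  have row_j : (j : ℕ) < S → ∀ k, A j k = 0 := fun hj => congrFun (hA.row_eq_zero j hj)
  have apply_S : (j : ℕ) ≤ S → A j S = 0 := fun hj => hj.lt_or_eq.elim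
    (fun hj => row_j hj S) fun hj => by rw [Fin.ext hj, hA.diag]
  simp only [Matrix.sub_apply, Matrix.smul_apply, vecMulVec_apply, Pi.add_apply, Pi.single_apply,
    col_apply, smul_eq_mul] at schur_eq_zero
  grind

end IsGenericFrom

lemma exists_bidiagonal_eliminate (hST : (T : ℕ) = S + 1) (hA : IsGenericFrom S A)
    (hP : IsUnitriangularFrom (S + 2) P)
    (hPA : IsAntitriangularFrom (S + 2) (P * schurComplement A S T)) {p q : Fin n}
    (hp : (p : ℕ) + 2 = n) (hq : (q : ℕ) + 1 = n) :
    ∃ f g : ℕ → K, Function.support f = Set.Icc (S + 1 : ℕ) (n - 2) ∧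
      Function.support g = Set.Icc (S + 2 : ℕ) (n - 1) ∧
      IsUnitriangularFrom S (bidiagonal n f * (bidiagonal n g * P)) ∧
      IsAntitriangularFrom S (bidiagonal n f * (bidiagonal n g * P) * A) ∧
      ∃ t : K, t ≠ 0 ∧
        bidiagonal n f * (bidiagonal n g * P) * (A - schurComplement A S T) *
            (bidiagonal n f * (bidiagonal n g * P))ᵀ =
          t • wedge (Pi.single p 1) (Pi.single q 1) := by
  have hAST := hA.apply_ne_zero hST
  obtain ⟨f, g, support_f, support_g, α, β, γ, hα, hβ, fgx, fgy⟩ :=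
    exists_bidiagonal_mulVec_pair_eq_single hp hq (show (S : ℕ) ≤ p by omega)
      (x := P *ᵥ A.col S) (y := P *ᵥ A.col T)
      (fun k hk => by
        rw [hP.mulVec_apply_of_lt _ (by omega), col_apply]
        rcases hk.lt_or_eq with hk | hk
        · rw [hA.row_eq_zero k hk, Pi.zero_apply]
        · rw [Fin.ext hk, hA.diag])
      (fun k hk => by
        rw [hP.mulVec_apply_of_lt _ (by omega), col_apply, hA.row_eq_zero k hk, Pi.zero_apply])
      (fun k hk => hA.mulVec_col_ne_zero hST hP hPA hk)
      (fun k l hk hkl => hA.minor_mulVec_col_ne_zero hST hP hPA hk hkl)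
  rw [mulVec_mulVec, mulVec_mulVec, Matrix.mul_assoc] at fgx fgy
  have f_eq_zero : ∀ i ≤ (S : ℕ), f i = 0 := fun i hi => by
    rw [← Function.notMem_support, support_f]
    rw [Set.mem_Icc]
    omega
  have g_eq_zero : ∀ i ≤ (S : ℕ), g i = 0 := fun i hi => by
    rw [← Function.notMem_support, support_g]
    rw [Set.mem_Icc]
    omega
  refine ⟨f, g, support_f, support_g,
    ((hP.mono (by omega)).bidiagonal_mul g_eq_zero).bidiagonal_mul f_eq_zero,
    hA.isAntitriangularFrom_mul hST hp hq fgx fgy ?_,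
    -((A S T)⁻¹ * (α * β)), by simp [hAST, hα, hβ], ?_⟩
  · rw [Matrix.mul_assoc, Matrix.mul_assoc]
    exact (hPA.bidiagonal_mul g).bidiagonal_mul f
  · rw [schurComplement, sub_sub_cancel, Matrix.mul_smul, Matrix.smul_mul, mul_wedge_mul_transpose,
      fgx, fgy, wedge_single_add_single, smul_smul, mul_neg]

end EliminationStep

section Generators

variable {n : ℕ}

/-- The identification of the index set of `ℝⁿ ⊕ ℝⁿ` with that of `ℝ²ⁿ`. -/
def sumFinEquivTwoMul (n : ℕ) : Fin n ⊕ Fin n ≃ Fin (2 * n) :=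
  finSumFinEquiv.trans (finCongr (two_mul n).symm)

lemma val_sumFinEquivTwoMul_inl (p : Fin n) : (sumFinEquivTwoMul n (Sum.inl p) : ℕ) = p := rfl

lemma val_sumFinEquivTwoMul_inr (p : Fin n) : (sumFinEquivTwoMul n (Sum.inr p) : ℕ) = n + p := rfl

lemma xMat_submatrix_of_lt {i : ℕ} (h1i : 1 ≤ i) (hin : i < n) (t : ℝ) :
    (xMat n i t).submatrix (sumFinEquivTwoMul n) (sumFinEquivTwoMul n) =
      parabolicBlock (bidiagonal n (Pi.single i t)) 0 := by
  rw [parabolicBlock, inv_bidiagonal_single]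
  ext (p | p) (q | q) <;>
    simp only [submatrix_apply, xMat, of_apply, val_sumFinEquivTwoMul_inl,
      val_sumFinEquivTwoMul_inr, fromBlocks_apply₁₁, fromBlocks_apply₁₂, fromBlocks_apply₂₁,
      fromBlocks_apply₂₂, transpose_apply, bidiagonal_apply, Matrix.mul_zero, Matrix.zero_apply,
      Pi.single_apply] <;>
    grind

lemma xMat_submatrix_self {p q : Fin n} (hp : (p : ℕ) + 2 = n) (hq : (q : ℕ) + 1 = n) (t : ℝ) :
    (xMat n n t).submatrix (sumFinEquivTwoMul n) (sumFinEquivTwoMul n) =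
      parabolicBlock 1 (t • wedge (Pi.single p 1) (Pi.single q 1)) := by
  rw [parabolicBlock, inv_one, Matrix.one_mul, transpose_one]
  ext (i | i) (j | j) <;>
    simp only [submatrix_apply, xMat, of_apply, val_sumFinEquivTwoMul_inl,
      val_sumFinEquivTwoMul_inr, fromBlocks_apply₁₁, fromBlocks_apply₁₂, fromBlocks_apply₂₁,
      fromBlocks_apply₂₂, one_apply, Matrix.zero_apply, Matrix.smul_apply, wedge_apply,
      Pi.single_apply, smul_eq_mul, lt_irrefl, if_false] <;>
    grind

/-- The block matrix `parabolicBlock P A` is a product `x_{w_1}(t_1) x_{w_2}(t_2) ⋯` along the word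
`w` with all parameters nonzero. The list `l` pairs each letter with its parameter. -/
def IsFactoredAlong (w : List ℕ) (P A : Matrix (Fin n) (Fin n) ℝ) : Prop :=
  ∃ l : List (ℕ × ℝ), l.map Prod.fst = w ∧ (∀ x ∈ l, x.2 ≠ 0) ∧
    (l.map fun x => xMat n x.1 x.2).prod.submatrix (sumFinEquivTwoMul n) (sumFinEquivTwoMul n) =
      parabolicBlock P A

lemma isFactoredAlong_nil : IsFactoredAlong [] (1 : Matrix (Fin n) (Fin n) ℝ) 0 :=
  ⟨[], rfl, by simp, by simp [parabolicBlock_one_zero]⟩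

lemma decRun_eq_nil {a b : ℕ} (hab : a < b) : decRun a b = [] := by
  simp [decRun, show a + 1 - b = 0 by omega]

lemma decRun_succ {a b : ℕ} (hab : b ≤ a + 1) : decRun (a + 1) b = (a + 1) :: decRun a b := by
  rw [decRun, show a + 1 + 1 - b = a + 1 - b + 1 by omega, List.range'_concat, List.reverse_append,
    show b + 1 * (a + 1 - b) = a + 1 by omega]
  rfl

namespace IsFactoredAlong

variable {w : List ℕ} {P A B : Matrix (Fin n) (Fin n) ℝ}

lemma cons {i : ℕ} {t : ℝ} (ht : t ≠ 0) {Q C : Matrix (Fin n) (Fin n) ℝ}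
    (hi : (xMat n i t).submatrix (sumFinEquivTwoMul n) (sumFinEquivTwoMul n) = parabolicBlock Q C)
    (hP : IsUnit P.det) (hw : IsFactoredAlong w P A) :
    IsFactoredAlong (i :: w) (Q * P) (A + P⁻¹ * C * P⁻¹ᵀ) := by
  obtain ⟨l, rfl, l_ne_zero, hl⟩ := hw
  refine ⟨(i, t) :: l, rfl, List.forall_mem_cons.mpr ⟨ht, l_ne_zero⟩, ?_⟩
  rw [List.map_cons, List.prod_cons, ← submatrix_mul_equiv _ _ _ (sumFinEquivTwoMul n), hi, hl,
    parabolicBlock_mul C A hP]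

lemma cons_of_lt {i : ℕ} (h1i : 1 ≤ i) (hin : i < n) {t : ℝ} (ht : t ≠ 0) (hP : IsUnit P.det)
    (hw : IsFactoredAlong w P A) :
    IsFactoredAlong (i :: w) (bidiagonal n (Pi.single i t) * P) A := by
  simpa using hw.cons ht (xMat_submatrix_of_lt h1i hin t) hP

lemma cons_self {p q : Fin n} (hp : (p : ℕ) + 2 = n) (hq : (q : ℕ) + 1 = n) {t : ℝ} (ht : t ≠ 0)
    (hP : IsUnit P.det)
    (hAB : P * (A - B) * Pᵀ = t • wedge (Pi.single p 1) (Pi.single q 1))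
    (hw : IsFactoredAlong w P B) : IsFactoredAlong (n :: w) P A := by
  have hPt : IsUnit Pᵀ.det := isUnit_det_transpose P hP
  have hA : B + P⁻¹ * (P * (A - B) * Pᵀ) * P⁻¹ᵀ = A := by
    rw [Matrix.mul_assoc P, nonsing_inv_mul_cancel_left _ _ hP, transpose_nonsing_inv,
      mul_nonsing_inv_cancel_right _ _ hPt, add_sub_cancel]
  simpa [← hAB, hA] using hw.cons ht (xMat_submatrix_self hp hq t) hP

lemma decRun_append {a b : ℕ} (hb : 1 ≤ b) (han : a < n) {f : ℕ → ℝ}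
    (support_f : Function.support f = Set.Icc b a) (hP : IsUnit P.det)
    (hw : IsFactoredAlong w P A) :
    IsFactoredAlong (decRun a b ++ w) (bidiagonal n f * P) A := by
  induction a generalizing f with
  | zero =>
    rw [Set.Icc_eq_empty (by omega), Function.support_eq_empty_iff] at support_f
    rwa [decRun_eq_nil hb, support_f, bidiagonal_zero, Matrix.one_mul]
  | succ a ih =>
    rcases lt_or_ge (a + 1) b with hab | hba
    · rw [Set.Icc_eq_empty hab.not_ge, Function.support_eq_empty_iff] at support_f
      rwa [decRun_eq_nil hab, support_f, bidiagonal_zero, Matrix.one_mul]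
    · have f_ne_zero_iff : ∀ i, f i ≠ 0 ↔ b ≤ i ∧ i ≤ a + 1 := Set.ext_iff.mp support_f
      set g := Function.update f (a + 1) 0 with hg
      have support_g : Function.support g = Set.Icc b a := by
        ext i
        have := f_ne_zero_iff i
        simp only [hg, Function.mem_support, Function.update_apply, Set.mem_Icc]
        grind
      have f_eq : f = Pi.single (a + 1) (f (a + 1)) + g := by
        ext i
        simp only [hg, Pi.add_apply, Pi.single_apply, Function.update_apply]
        grind
      have product_eq_zero : ∀ i, (Pi.single (a + 1) (f (a + 1)) : ℕ → ℝ) i * g (i + 1) = 0 := by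
        intro i
        have := f_ne_zero_iff (i + 1)
        simp only [hg, Pi.single_apply, Function.update_apply]
        grind
      rw [decRun_succ hba, List.cons_append, f_eq, ← bidiagonal_mul_bidiagonal product_eq_zero,
        Matrix.mul_assoc]
      exact (ih (by omega) support_g).cons_of_lt (by omega) han
        ((f_ne_zero_iff _).mpr ⟨hba, le_rfl⟩) (by rwa [det_mul, det_bidiagonal, one_mul])

end IsFactoredAlong

/-- The `m`-th block of the word `wordD n`, with `m` counted from `0`. -/
def wordBlock (n m : ℕ) : List ℕ :=
  n :: (decRun (n - 2) (2 * m + 1) ++ decRun (n - 1) (2 * m + 2))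

lemma wordD_eq_flatten_wordBlock (n : ℕ) :
    wordD n = ((List.range' 0 (n / 2)).map (wordBlock n)).flatten := by
  rw [← List.range_eq_range']
  rfl

/-- Peel off the rows `2 m` and `2 m + 1` by a Schur complement, which is generic from `2 m + 2`
on, and put back what was removed by one block of the word. -/
lemma IsGenericFrom.exists_isFactoredAlong {d m : ℕ} (hmd : m + d = n / 2)
    {A : Matrix (Fin n) (Fin n) ℝ} (hA : IsGenericFrom (2 * m) A) :
    ∃ P : Matrix (Fin n) (Fin n) ℝ, IsUnitriangularFrom (2 * m) P ∧
      IsAntitriangularFrom (2 * m) (P * A) ∧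
      IsFactoredAlong ((List.range' m d).map (wordBlock n)).flatten P A := by
  induction d generalizing m A with
  | zero =>
    obtain rfl : A = 0 := by
      ext i j
      rcases lt_or_ge (i : ℕ) (2 * m) with hi | hi
      · rw [hA.row_eq_zero i hi, Pi.zero_apply, Matrix.zero_apply]
      rcases lt_or_ge (j : ℕ) (2 * m) with hj | hj
      · rw [hA.apply_eq_zero_of_lt i hj, Matrix.zero_apply]
      · rw [show j = i by omega, hA.diag, Matrix.zero_apply]
    exact ⟨1, isUnitriangularFrom_one, fun i j _ => by simp, isFactoredAlong_nil⟩
  | succ d ih =>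
    let S : Fin n := ⟨2 * m, by omega⟩
    let T : Fin n := ⟨2 * m + 1, by omega⟩
    obtain ⟨P, hP, hPA, hfac⟩ :=
      ih (m := m + 1) (by omega) (isGenericFrom_schurComplement (S := S) (T := T) rfl hA)
    obtain ⟨f, g, support_f, support_g, unitriangular, antitriangular, t, ht, wedge_eq⟩ :=
      exists_bidiagonal_eliminate (S := S) (T := T) (p := ⟨n - 2, by omega⟩)
        (q := ⟨n - 1, by omega⟩) rfl hA hP hPA (by simp only; omega) (by simp only; omega)
    refine ⟨_, unitriangular, antitriangular, ?_⟩
    rw [List.range'_succ, List.map_cons, List.flatten_cons, wordBlock, List.cons_append,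
      List.append_assoc]
    have hgP : IsUnit (bidiagonal n g * P).det := by
      rw [det_mul, det_bidiagonal, one_mul]
      exact hP.isUnit_det
    exact (((hfac.decRun_append (by omega) (by omega) support_g hP.isUnit_det).decRun_append
      (by omega) (by omega) support_f hgP).cons_self (by simp only; omega) (by simp only; omega) ht
      unitriangular.isUnit_det wedge_eq)

end Generators

section Conclusion

variable {n : ℕ}

lemma eq_zero_of_det_submatrix_ne_zero {ι m K : Type*} [Fintype ι] [Fintype m] [DecidableEq m]
    [Field K] {A : Matrix ι ι K} {row col : m → ι} (row_injective : Function.Injective row)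
    (hdet : (A.submatrix row col).det ≠ 0) {c : ι → K}
    (support_c : ∀ r, c r ≠ 0 → r ∈ Set.range row) (hc : ∀ j, (c ᵥ* A) (col j) = 0) : c = 0 := by
  have comp_eq_zero : c ∘ row = 0 := by
    refine eq_zero_of_vecMul_eq_zero hdet (funext fun j => ?_)
    rw [Pi.zero_apply, ← hc j]
    refine Finset.sum_of_injOn row row_injective.injOn (by simp [Set.MapsTo]) ?_ fun _ _ => rfl
    intro r _ hr
    have : c r = 0 := by_contra fun hcr => hr (by simpa using support_c r hcr)
    rw [this, zero_mul]
  ext r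
  by_contra hcr
  obtain ⟨p, rfl⟩ := support_c r hcr
  exact hcr (congrFun comp_eq_zero p)

lemma isGenericFrom_zero_of_Mminor_ne_zero {A : Matrix (Fin n) (Fin n) ℝ} (hA : IsAlternating A)
    (hne : ∀ j k : ℕ, 1 ≤ j → j ≤ k → k ≤ n - 1 → Mminor n j k A ≠ 0) : IsGenericFrom 0 A where
  toIsAlternating := hA
  row_eq_zero i hi := absurd hi (Nat.not_lt_zero _)
  eq_zero_of_vecMul_eq_zero a i _ hai hin c support_c hc := by
    have hdet := right_ne_zero_of_mul
      (hne (i - a) (n - 1 - a) (by omega) (by omega) (by omega))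
    have ha : n - (n - 1 - a) - 1 = a := by omega
    simp only [ha] at hdet
    refine eq_zero_of_det_submatrix_ne_zero (fun p q hpq => ?_) hdet (fun r hr => ?_)
      (fun j => hc _ ?_)
    · grind
    · rcases support_c r hr with ⟨-, hra⟩ | hir
      · exact ⟨⟨r, by omega⟩, by simp [hra]⟩
      · exact ⟨⟨r - (i - a), by omega⟩, by grind⟩
    · grind

lemma length_decRun (a b : ℕ) : (decRun a b).length = a + 1 - b := by
  rw [decRun, List.length_reverse, List.length_range']

lemma length_flatten_wordBlock {M : ℕ} (hM : 2 * M ≤ n) :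
    ((List.range' 0 M).map (wordBlock n)).flatten.length = M * (2 * n - 1 - 2 * M) := by
  induction M with
  | zero => simp
  | succ M ih =>
    obtain ⟨e, rfl⟩ : ∃ e, n = 2 * M + 2 + e := ⟨n - (2 * M + 2), by omega⟩
    have length_block : (wordBlock (2 * M + 2 + e) M).length = 2 * e + 1 := by
      simp only [wordBlock, List.length_cons, List.length_append, length_decRun]
      omega
    rw [List.range'_concat, List.map_append, List.flatten_append, List.length_append, ih (by omega)]
    simp only [zero_add, one_mul, List.map_cons, List.map_nil, List.flatten_cons, List.flatten_nil,
      List.append_nil, length_block]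
    rw [show 2 * (2 * M + 2 + e) - 1 - 2 * M = 2 * M + 3 + 2 * e by omega,
      show 2 * (2 * M + 2 + e) - 1 - 2 * (M + 1) = 2 * M + 1 + 2 * e by omega]
    ring

lemma length_wordD (n : ℕ) : (wordD n).length = Npar n := by
  rw [wordD_eq_flatten_wordBlock, length_flatten_wordBlock (by omega), Npar]
  refine (Nat.div_eq_of_eq_mul_right two_pos ?_).symm
  obtain ⟨k, rfl | rfl⟩ := Nat.even_or_odd' n
  · rw [show 2 * k / 2 = k by omega, show 2 * (2 * k) - 1 - 2 * k = 2 * k - 1 by omega, mul_assoc]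
  · rw [show (2 * k + 1) / 2 = k by omega, show 2 * (2 * k + 1) - 1 - 2 * k = 2 * k + 1 by omega,
      Nat.add_sub_cancel]
    ring

lemma prodX_eq_prod_map {l : List (ℕ × ℝ)} (hl : l.map Prod.fst = wordD n) :
    prodX n (fun i => (l.getD i (0, 0)).2) = (l.map fun x => xMat n x.1 x.2).prod := by
  have length_l : Npar n = l.length := by rw [← length_wordD, ← hl, List.length_map]
  rw [prodX, ← hl]
  refine congrArg List.prod (List.ext_getElem (by simp [length_l]) fun k hk hk' => ?_)
  have hkl : k < l.length := by simpa using hk'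
  simp [hkl]

lemma Amat_eq_of_prodX_submatrix_eq {t : ℕ → ℝ} {P A : Matrix (Fin n) (Fin n) ℝ}
    (hP : IsUnit P.det)
    (ht : (prodX n t).submatrix (sumFinEquivTwoMul n) (sumFinEquivTwoMul n) =
      parabolicBlock P A) : Amat n t = A := by
  have hX1 : X1 n t = P := by
    ext p q
    exact congrFun (congrFun ht (Sum.inl p)) (Sum.inl q)
  have hX2 : X2 n t = P * A := by
    ext p q
    exact congrFun (congrFun ht (Sum.inl p)) (Sum.inr q)
  rw [Amat, hX1, hX2, nonsing_inv_mul_cancel_left _ _ hP]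

lemma IsFactoredAlong.exists_eq_Amat {P A : Matrix (Fin n) (Fin n) ℝ} (hP : IsUnit P.det)
    (hA : IsFactoredAlong (wordD n) P A) :
    ∃ t : ℕ → ℝ, (∀ i < Npar n, t i ≠ 0) ∧ A = Amat n t := by
  obtain ⟨l, hl, l_ne_zero, hprod⟩ := hA
  refine ⟨fun i => (l.getD i (0, 0)).2, fun i hi => ?_, ?_⟩
  · have hil : i < l.length := by rwa [← length_wordD, ← hl, List.length_map] at hi
    simp only [List.getD_eq_getElem l (0, 0) hil]
    exact l_ne_zero _ (List.getElem_mem hil)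
  · rw [← prodX_eq_prod_map hl] at hprod
    exact (Amat_eq_of_prodX_submatrix_eq hP hprod).symm

end Conclusion

/-- A skew-symmetric matrix whose minors `M_{j,k}` are all nonzero lies
in the image of the parametrization `t ↦ A(t)` with all parameters nonzero. -/
theorem mem_param_image_of_Mminor_ne_zero (n : ℕ) (hn : 2 ≤ n)
    (A : Matrix (Fin n) (Fin n) ℝ) (hA : Aᵀ = -A)
    (hne : ∀ j k : ℕ, 1 ≤ j → j ≤ k → k ≤ n - 1 → Mminor n j k A ≠ 0) :
    ∃ t : ℕ → ℝ, (∀ i < Npar n, t i ≠ 0) ∧ A = Amat n t := by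
  have generic : IsGenericFrom (2 * 0) A :=
    isGenericFrom_zero_of_Mminor_ne_zero (isAlternating_of_transpose_eq_neg hA) hne
  obtain ⟨P, unitriangular, -, factored⟩ :=
    generic.exists_isFactoredAlong (Nat.zero_add (n / 2))
  rw [← wordD_eq_flatten_wordBlock] at factored
  exact factored.exists_eq_Amat unitriangular.isUnit_det
end
end

section
/- Let (e_1,…,e_n,f_1,…,f_n) denote the standard basis of ℝ^{2n} and let Q be the quadratic form on ℝ^{2n} given by Q(x) = 2·Σ_{i=1}^{n} x_i x_{n+i} (so that in the Clifford algebra Cl(Q), with canonical embedding ι, one has ι(u)ι(v) + ι(v)ι(u) = 2q(u,v) where q(x,y) = Σ x_i y_{n+i} + Σ y_i x_{n+i}). In Cl(Q), set f := ι(f_1)·ι(f_2)⋯ι(f_n), and for S ⊆ {1,…,n} let e_S := ι(e_{l_1})⋯ι(e_{l_s}) where l_1 < ⋯ < l_s enumerate S. Let A be an n×n real skew-symmetric matrix and set h := ∏_{i=1}^{n} ι(e_i + Σ_{j=1}^{n} A_{ij} f_j), the product taken in increasing order of i. Then h·f = Σ_{I ⊆ {1,…,n}, |I| even} sgn(I,[n])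 · 2^{|I|/2} · Pf_I(A) · e_{{1,…,n}∖I} · f. -/
noncomputable section

open Matrix

/-!
Write `a i = ι eᵢ` and `c i = ι (∑ j, A i j • fⱼ)`. Then `c i` kills `f`, and
`c i * a j + a j * c i = 2 * A i j` is a scalar. Multiplying out `∏ (a i + c i) * f` from the right,
`c i` is moved through a product of `a j` until it meets `f`, leaving a contraction `2 * A i j`
for each `a j` it passes. Hence the coefficient of the product over the complement of `I` is, up to
sign, determined by the first-row expansion which characterises the Pfaffian of `2 • A` on `I`. The
sign is counted by the pairs `k < s` with `k ∈ I` and `s ∉ I`.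

The first-row expansion of the permutation sum holds because its summands are unchanged when `σ` is
precomposed with a permutation of the pairs `{2 * i, 2 * i + 1}` or with the simultaneous flip of
all of them. These act transitively on positions, so one may assume `σ 0 = 0`.
-/

section PermSums

open Equiv Finset

/-- The permutation of `Fin (N + 1)` with successive values `p, ρ 0, …, ρ (N - 1)`, where the
values of `ρ` are relabelled by `p.succAbove` so as to avoid `p`. -/
def permCons {N : ℕ} (p : Fin (N + 1)) (ρ : Perm (Fin N)) : Perm (Fin (N + 1)) :=
  p.cycleRange.symm * Perm.decomposeFin.symm (0, ρ)

variable {N : ℕ}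

@[simp]
lemma permCons_zero (p : Fin (N + 1)) (ρ : Perm (Fin N)) : permCons p ρ 0 = p := by
  simp [permCons]

@[simp]
lemma permCons_succ (p : Fin (N + 1)) (ρ : Perm (Fin N)) (x : Fin N) :
    permCons p ρ x.succ = p.succAbove (ρ x) := by
  simp [permCons]

lemma sign_permCons (p : Fin (N + 1)) (ρ : Perm (Fin N)) :
    Perm.sign (permCons p ρ) = (-1) ^ (p : ℕ) * Perm.sign ρ := by
  simp [permCons, Perm.decomposeFin.symm_sign]

lemma permCons_bijective :
    Function.Bijective fun x : Fin (N + 1) × Perm (Fin N) => permCons x.1 x.2 := by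
  refine (Fintype.bijective_iff_injective_and_card _).2
    ⟨?_, by simp [Fintype.card_perm, Nat.factorial_succ]⟩
  rintro ⟨p, ρ⟩ ⟨q, τ⟩ (h : permCons p ρ = permCons q τ)
  obtain rfl : p = q := by simpa using congr($h 0)
  have hρ : ρ = τ := Equiv.ext fun x => by simpa using congr($h x.succ)
  rw [hρ]

lemma sum_perm_fin_succ {M : Type*} [AddCommMonoid M] (F : Perm (Fin (N + 1)) → M) :
    ∑ σ, F σ = ∑ p, ∑ ρ, F (permCons p ρ) := by
  rw [← Fintype.sum_prod_type']
  exact (permCons_bijective.sum_comp F).symm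

lemma sum_perm_apply_zero_eq {M : Type*} [AddCommMonoid M] (F : Perm (Fin (N + 1)) → M)
    (p : Fin (N + 1)) : ∑ σ with σ 0 = p, F σ = ∑ ρ, F (permCons p ρ) := by
  rw [sum_filter, sum_perm_fin_succ, sum_comm]
  simp

lemma sum_perm_eq_card_nsmul {α M : Type*} [Fintype α] [DecidableEq α] [AddCommMonoid M]
    (F : Perm α → M) (x : α) (hF : ∀ p, ∃ τ : Perm α, τ x = p ∧ ∀ σ, F (σ * τ) = F σ) :
    ∑ σ, F σ = Fintype.card α • ∑ σ with σ x = x, F σ := by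
  have fiber_eq (p : α) : ∑ σ : Perm α with σ⁻¹ x = p, F σ = ∑ σ with σ x = x, F σ := by
    obtain ⟨τ, rfl, hτ⟩ := hF p
    refine sum_equiv (Equiv.mulRight τ) (fun σ => ?_) fun σ _ => (hτ σ).symm
    simp [symm_apply_eq, eq_comm (a := x)]
  rw [← sum_fiberwise univ (fun σ : Perm α => σ⁻¹ x) F, sum_congr rfl fun p _ => fiber_eq p]
  simp

end PermSums

section PairEquiv

/-- The consecutive pairing of `Fin (2 * M)`: `(i, b)` is sent to the position `2 * i + b`. The
size is a variable `m` with `2 * M = m` so that `m` may be specialised without casts. -/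
def pairEquiv {M m : ℕ} (h : 2 * M = m) : Fin M × Fin 2 ≃ Fin m :=
  finProdFinEquiv.trans (finCongr (by omega))

variable {M m : ℕ}

lemma pairEquiv_zero_zero (h : 2 * (M + 1) = m + 2) : pairEquiv h (0, 0) = 0 := by
  ext; simp [pairEquiv]

lemma pairEquiv_zero_one (h : 2 * (M + 1) = m + 2) : pairEquiv h (0, 1) = Fin.succ 0 := by
  ext; simp [pairEquiv]

lemma pairEquiv_succ (h : 2 * (M + 1) = m + 2) (h' : 2 * M = m) (i : Fin M) (b : Fin 2) :
    pairEquiv h (i.succ, b) = (pairEquiv h' (i, b)).succ.succ := by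
  ext; simp [pairEquiv, mul_add]; lia

end PairEquiv

section PfaffianTerm

open Equiv Finset

variable {K : Type*} [CommRing K] {M m : ℕ}

/-- The summand of `σ` in the Pfaffian of an `m × m` matrix, `m = 2 * M`. -/
def pfaffianTerm (h : 2 * M = m) (B : Matrix (Fin m) (Fin m) K) (σ : Perm (Fin m)) : K :=
  ((Perm.sign σ : ℤ) : K) * ∏ i : Fin M, B (σ (pairEquiv h (i, 0))) (σ (pairEquiv h (i, 1)))

lemma pfaffianTerm_mul_permute_pairs (h : 2 * M = m) (B : Matrix (Fin m) (Fin m) K)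
    (σ : Perm (Fin m)) (π : Perm (Fin M)) :
    pfaffianTerm h B (σ * (pairEquiv h).permCongr (prodCongrLeft fun _ => π)) =
      pfaffianTerm h B σ := by
  unfold pfaffianTerm
  congr 1
  · simp [Perm.sign_permCongr, Perm.sign_prodCongrLeft]
  · exact Fintype.prod_equiv π _ _ fun i => by simp

-- Each of the `M` transpositions contributes one sign to `sign σ` and one to the product.
lemma pfaffianTerm_mul_flip_pairs (h : 2 * M = m) {B : Matrix (Fin m) (Fin m) K} (hB : Bᵀ = -B)
    (σ : Perm (Fin m)) :
    pfaffianTerm h B (σ * (pairEquiv h).permCongr (prodCongrRight fun _ => swap 0 1)) =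
      pfaffianTerm h B σ := by
  have skew (p q : Fin m) : B p q = -B q p := congr($hB q p)
  have sign_flip : Perm.sign (swap (0 : Fin 2) 1) = -1 := Perm.sign_swap (by decide)
  have signs_cancel : (-1 : K) ^ M * (-1) ^ M = 1 := by rw [← mul_pow]; simp
  simp only [pfaffianTerm, Perm.coe_mul, Function.comp_apply, permCongr_apply, symm_apply_apply,
    prodCongrRight_apply, swap_apply_left, swap_apply_right, map_mul, Perm.sign_permCongr,
    Perm.sign_prodCongrRight, sign_flip, prod_const, card_univ, Fintype.card_fin]
  rw [prod_congr rfl fun i _ => skew (σ (pairEquiv h (i, 1))) (σ (pairEquiv h (i, 0))), prod_neg,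
    card_univ, Fintype.card_fin]
  push_cast
  linear_combination (Perm.sign σ : ℤ) *
    (∏ i : Fin M, B (σ (pairEquiv h (i, 0))) (σ (pairEquiv h (i, 1)))) * signs_cancel

lemma exists_perm_pfaffianTerm_mul_eq (h : 2 * (M + 1) = m + 2)
    {B : Matrix (Fin (m + 2)) (Fin (m + 2)) K} (hB : Bᵀ = -B) (p : Fin (m + 2)) :
    ∃ τ : Perm (Fin (m + 2)), τ 0 = p ∧
      ∀ σ, pfaffianTerm h B (σ * τ) = pfaffianTerm h B σ := by
  obtain ⟨⟨i, b⟩, rfl⟩ := (pairEquiv h).surjective p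
  rw [← pairEquiv_zero_zero h]
  fin_cases b
  · exact ⟨_, by simp, fun σ => pfaffianTerm_mul_permute_pairs h B σ (swap 0 i)⟩
  · refine ⟨(pairEquiv h).permCongr (prodCongrLeft fun _ => swap 0 i) *
      (pairEquiv h).permCongr (prodCongrRight fun _ => swap 0 1), by simp, fun σ => ?_⟩
    rw [← mul_assoc, pfaffianTerm_mul_flip_pairs h hB, pfaffianTerm_mul_permute_pairs]

lemma pfaffianTerm_permCons_permCons (h : 2 * (M + 1) = m + 2) (h' : 2 * M = m)
    (B : Matrix (Fin (m + 2)) (Fin (m + 2)) K) (k : Fin (m + 1)) (ρ : Perm (Fin m)) :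
    pfaffianTerm h B (permCons 0 (permCons k ρ)) = (-1) ^ (k : ℕ) * B 0 k.succ *
      pfaffianTerm h' (B.submatrix (Fin.succ ∘ k.succAbove) (Fin.succ ∘ k.succAbove)) ρ := by
  simp only [pfaffianTerm, Fin.prod_univ_succ, pairEquiv_zero_zero, pairEquiv_zero_one,
    pairEquiv_succ h h', permCons_zero, permCons_succ, sign_permCons, Fin.zero_succAbove,
    Fin.val_zero, pow_zero, one_mul, submatrix_apply, Function.comp_apply]
  push_cast
  ring

lemma sum_pfaffianTerm_succ (h : 2 * (M + 1) = m + 2) (h' : 2 * M = m)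
    {B : Matrix (Fin (m + 2)) (Fin (m + 2)) K} (hB : Bᵀ = -B) :
    ∑ σ, pfaffianTerm h B σ = 2 * (M + 1) * ∑ k : Fin (m + 1), (-1) ^ (k : ℕ) * B 0 k.succ *
      ∑ ρ, pfaffianTerm h' (B.submatrix (Fin.succ ∘ k.succAbove) (Fin.succ ∘ k.succAbove)) ρ := by
  have card_eq : ((m + 2 : ℕ) : K) = 2 * (M + 1) := by rw [← h]; push_cast; rfl
  rw [sum_perm_eq_card_nsmul _ 0 (exists_perm_pfaffianTerm_mul_eq h hB), sum_perm_apply_zero_eq,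
    sum_perm_fin_succ, Fintype.card_fin, nsmul_eq_mul, card_eq]
  simp only [pfaffianTerm_permCons_permCons h h', mul_sum]

end PfaffianTerm

section Pfaffian

open Finset

lemma Pfaff_eq_sum_pfaffianTerm {M m : ℕ} (h : 2 * M = m) (B : Matrix (Fin m) (Fin m) ℝ) :
    Pfaff B = 1 / (2 ^ M * (M.factorial : ℝ)) * ∑ σ, pfaffianTerm h B σ := by
  obtain rfl : M = m / 2 := by omega
  have pairEquiv_fst (i : Fin (m / 2)) : pairEquiv h (i, 0) = ⟨2 * i, by omega⟩ := by
    ext; simp [pairEquiv]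
  have pairEquiv_snd (i : Fin (m / 2)) : pairEquiv h (i, 1) = ⟨2 * i + 1, by omega⟩ := by
    ext; simp [pairEquiv, add_comm]
  simp only [Pfaff, pfaffianTerm, pairEquiv_fst, pairEquiv_snd]

theorem Pfaff_eq_sum_first_row {m : ℕ} (hm : Even m) {B : Matrix (Fin (m + 2)) (Fin (m + 2)) ℝ}
    (hB : Bᵀ = -B) :
    Pfaff B = ∑ k : Fin (m + 1), (-1) ^ (k : ℕ) * B 0 k.succ *
      Pfaff (B.submatrix (Fin.succ ∘ k.succAbove) (Fin.succ ∘ k.succAbove)) := by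
  obtain ⟨M, h'⟩ := even_iff_two_dvd.1 hm
  have h : 2 * (M + 1) = m + 2 := by omega
  have normalization : 1 / (2 ^ (M + 1) * ((M + 1).factorial : ℝ)) * (2 * (M + 1)) =
      1 / (2 ^ M * (M.factorial : ℝ)) := by
    rw [Nat.factorial_succ]
    push_cast
    field_simp
    ring
  simp only [Pfaff_eq_sum_pfaffianTerm h, Pfaff_eq_sum_pfaffianTerm h'.symm]
  rw [sum_pfaffianTerm_succ h h'.symm hB, ← mul_assoc, normalization, mul_sum]
  exact sum_congr rfl fun k _ => mul_left_comm _ _ _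

lemma Pfaff_smul {m : ℕ} (c : ℝ) (B : Matrix (Fin m) (Fin m) ℝ) :
    Pfaff (c • B) = c ^ (m / 2) * Pfaff B := by
  simp only [Pfaff, Matrix.smul_apply, smul_eq_mul, prod_mul_distrib, prod_const, card_univ,
    Fintype.card_fin, mul_sum]
  exact sum_congr rfl fun σ _ => by ring

lemma PfI_smul {n : ℕ} (c : ℝ) (A : Matrix (Fin n) (Fin n) ℝ) (I : Finset (Fin n)) :
    PfI (c • A) I = c ^ (#I / 2) * PfI A I :=
  Pfaff_smul c _

lemma PfI_map_univ {n m : ℕ} (A : Matrix (Fin n) (Fin n) ℝ) (v : Fin m ↪o Fin n) :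
    PfI A (univ.map v.toEmbedding) = Pfaff (A.submatrix v v) := by
  suffices ∀ I : Finset (Fin n), #I = m → (∀ x, v x ∈ I) →
      PfI A I = Pfaff (A.submatrix v v) from this _ (by simp) (by simp)
  rintro I rfl hv
  obtain rfl : v = I.orderEmbOfFin rfl := orderEmbOfFin_unique' rfl hv
  rfl

lemma PfI_empty {n : ℕ} (A : Matrix (Fin n) (Fin n) ℝ) : PfI A ∅ = 1 := by
  simpa [Pfaff] using PfI_map_univ A (OrderEmbedding.ofIsEmpty : Fin 0 ↪o Fin n)

lemma card_filter_map_univ_lt {ι : Type*} [LinearOrder ι] {m : ℕ} (u : Fin m ↪o ι) (k : Fin m) :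
    #{x ∈ univ.map u.toEmbedding | x < u k} = k := by
  simp [filter_map, filter_gt_eq_Iio]

lemma erase_map_univ {ι : Type*} [LinearOrder ι] {m : ℕ} (u : Fin (m + 1) ↪o ι) (k : Fin (m + 1)) :
    (univ.map u.toEmbedding).erase (u k) =
      univ.map (k.succAboveOrderEmb.trans u).toEmbedding := by
  have erase_eq : univ.erase k = univ.map k.succAboveEmb := by
    rw [← compl_singleton, map_eq_image, Fin.coe_succAboveEmb, Fin.image_succAbove_univ]
  exact (map_erase u.toEmbedding univ k).symm.trans (by rw [erase_eq, Finset.map_map]; rfl)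

theorem PfI_insert_eq_sum {n : ℕ} {A : Matrix (Fin n) (Fin n) ℝ} (hA : Aᵀ = -A) {i : Fin n}
    {J : Finset (Fin n)} (hi : ∀ j ∈ J, i < j) (hJ : Odd #J) :
    PfI A (insert i J) = ∑ j ∈ J, (-1) ^ #{k ∈ J | k < j} * A i j * PfI A (J.erase j) := by
  obtain ⟨M, hM⟩ := hJ
  obtain ⟨u, rfl⟩ : ∃ u : Fin (2 * M + 1) ↪o Fin n, univ.map u.toEmbedding = J :=
    ⟨J.orderEmbOfFin hM, map_orderEmbOfFin_univ J hM⟩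
  let v : Fin (2 * M + 2) ↪o Fin n := OrderEmbedding.ofStrictMono (Fin.cons i u)
    (Fin.strictMono_cons.2 ⟨fun k => hi _ (by simp), u.strictMono⟩)
  have insert_eq : insert i (univ.map u.toEmbedding) = univ.map v.toEmbedding := by
    ext x; simp [v, Fin.exists_fin_succ, eq_comm (a := x)]
  have skew : (A.submatrix v v)ᵀ = -A.submatrix v v := congr(($hA).submatrix v v)
  rw [insert_eq, PfI_map_univ, Pfaff_eq_sum_first_row (even_two_mul M) skew, sum_map]
  refine sum_congr rfl fun k _ => ?_
  simp only [RelEmbedding.coe_toEmbedding, card_filter_map_univ_lt, erase_map_univ, PfI_map_univ]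
  rfl

end Pfaffian

section PowersetSum

open Finset

lemma sum_powerset_sum_sdiff {ι M : Type*} [DecidableEq ι] [AddCommMonoid M] (S : Finset ι)
    (F : Finset ι → ι → M) :
    ∑ I ∈ S.powerset, ∑ j ∈ S \ I, F I j = ∑ J ∈ S.powerset, ∑ j ∈ J, F (J.erase j) j := by
  rw [sum_sigma', sum_sigma']
  refine sum_bij' (fun x _ => ⟨insert x.2 x.1, x.2⟩) (fun x _ => ⟨x.1.erase x.2, x.2⟩)
    ?_ ?_ ?_ ?_ ?_
  all_goals
    rintro ⟨I, j⟩ h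
    simp only [mem_sigma, mem_powerset, mem_sdiff] at h
    grind [erase_insert, insert_erase]

end PowersetSum

section Crossings

open Finset

variable {ι : Type*} [LinearOrder ι]

/-- The number of pairs `(k, s)` with `k ∈ I`, `s ∈ T` and `k < s`; for disjoint `I` and `T`, the
number of transpositions needed to move `I` past `T` in the ordered list of `I ∪ T`. -/
def crossings (I T : Finset ι) : ℕ := ∑ k ∈ I, #{s ∈ T | k < s}

lemma crossings_eq_sum_right (I T : Finset ι) : crossings I T = ∑ s ∈ T, #{k ∈ I | k < s} := by
  simp only [crossings, card_filter]
  exact sum_comm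

lemma crossings_insert_left {k : ι} {I : Finset ι} (hk : k ∉ I) (T : Finset ι) :
    crossings (insert k I) T = #{s ∈ T | k < s} + crossings I T :=
  sum_insert hk

lemma crossings_insert_right {s : ι} {T : Finset ι} (I : Finset ι) (hs : s ∉ T) :
    crossings I (insert s T) = #{k ∈ I | k < s} + crossings I T := by
  simp only [crossings_eq_sum_right, sum_insert hs]

lemma card_filter_lt_add_card_filter_gt {j : ι} {T : Finset ι} (hj : j ∉ T) :
    #{s ∈ T | s < j} + #{s ∈ T | j < s} = #T := by
  rw [← card_filter_add_card_filter_not (s := T) (· < j)]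
  congr 2
  exact filter_congr fun s hs => by grind

lemma crossings_add_crossings_of_disjoint {I T : Finset ι} (h : Disjoint I T) :
    crossings I T + crossings T I = #I * #T := by
  rw [crossings_eq_sum_right T I, crossings, ← sum_add_distrib, ← smul_eq_mul, ← sum_const]
  refine sum_congr rfl fun k hk => ?_
  rw [add_comm, card_filter_lt_add_card_filter_gt (disjoint_left.1 h hk)]

lemma crossings_self (I : Finset ι) : crossings I I = (#I).choose 2 := by
  induction I using Finset.induction_on_max with
  | empty => rfl
  | insert a s ha ih =>
    have ha' : a ∉ s := fun h => (ha a h).false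
    have filter_eq : ({k ∈ insert a s | k < a}) = s := by grind
    have filter_eq' : ({k ∈ s | a < k}) = ∅ := by grind
    rw [crossings_insert_right _ ha', crossings_insert_left ha', filter_eq, filter_eq', ih,
      card_insert_of_notMem ha', card_empty, zero_add, Nat.choose_succ_succ', Nat.choose_one_right]

end Crossings

section SubsetSign

open Finset

variable {n : ℕ}

lemma sum_val_eq_choose_add_crossings (I : Finset (Fin n)) :
    ∑ i ∈ I, (i : ℕ) = (#I).choose 2 + crossings Iᶜ I := by
  calc ∑ i ∈ I, (i : ℕ) = crossings univ I := by
        simp [crossings_eq_sum_right, filter_gt_eq_Iio]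
    _ = crossings I I + crossings Iᶜ I := (sum_add_sum_compl I _).symm
    _ = (#I).choose 2 + crossings Iᶜ I := by rw [crossings_self]

lemma sgnSet_eq_neg_one_pow_crossings_compl (I : Finset (Fin n)) :
    sgnSet I = (-1) ^ crossings Iᶜ I := by
  have triangle : #I * (#I + 1) / 2 = (#I).choose 2 + #I := by
    rw [Nat.choose_two_right, ← Nat.triangle_succ, Nat.add_sub_cancel, mul_comm]
  rw [sgnSet, triangle, sum_add_distrib, sum_val_eq_choose_add_crossings, sum_const, smul_eq_mul,
    mul_one]
  congr 1
  omega

lemma sgnSet_eq_neg_one_pow_crossings {I : Finset (Fin n)} (hI : Even #I) :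
    sgnSet I = (-1) ^ crossings I Iᶜ := by
  have even_sum : Even (crossings I Iᶜ + crossings Iᶜ I) := by
    rw [crossings_add_crossings_of_disjoint disjoint_compl_right]
    exact hI.mul_right _
  rw [sgnSet_eq_neg_one_pow_crossings_compl]
  exact neg_one_pow_congr (by grind)

end SubsetSign

section Wick

open Finset

variable {ι : Type*} [LinearOrder ι]

section Monoid

variable {R : Type*} [Monoid R]

/-- The product of `x i` over `i ∈ S`, in increasing order of `i`. -/
def orderedProd (x : ι → R) (S : Finset ι) : R := ((S.sort (· ≤ ·)).map x).prod

@[simp]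
lemma orderedProd_empty (x : ι → R) : orderedProd x ∅ = 1 := by
  simp [orderedProd]

lemma orderedProd_insert (x : ι → R) {i : ι} {S : Finset ι} (hi : ∀ j ∈ S, i < j) :
    orderedProd x (insert i S) = x i * orderedProd x S := by
  rw [orderedProd, sort_insert _ (fun j hj => (hi j hj).le) fun h => (hi i h).false,
    List.map_cons, List.prod_cons, orderedProd]

end Monoid

variable {K R : Type*} [CommRing K] [Ring R] [Algebra K R]

-- Move `c` to the right through the product until it meets `f`.
lemma mul_orderedProd_mul_eq_sum {a : ι → R} {c f : R} {t : ι → K}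
    (hc : ∀ j, c * a j + a j * c = algebraMap K R (t j)) (hf : c * f = 0) (T : Finset ι) :
    c * (orderedProd a T * f) =
      ∑ j ∈ T, ((-1) ^ #{s ∈ T | s < j} * t j) • (orderedProd a (T.erase j) * f) := by
  induction T using Finset.induction_on_min with
  | empty => simp [hf]
  | insert i S hi ih =>
    have hiS : i ∉ S := fun h => (hi i h).false
    have none_below : #{s ∈ insert i S | s < i} = 0 := by
      simp only [card_eq_zero]; grind
    have later_term (j : ι) (hj : j ∈ S) :
        ((-1) ^ #{s ∈ insert i S | s < j} * t j) • (orderedProd a ((insert i S).erase j) * f) =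
          -(a i * ((-1) ^ #{s ∈ S | s < j} * t j) • (orderedProd a (S.erase j) * f)) := by
      rw [filter_insert, if_pos (hi j hj), card_insert_of_notMem (by simp [hiS]),
        erase_insert_of_ne (hi j hj).ne,
        orderedProd_insert a fun k hk => hi k (mem_of_mem_erase hk), mul_smul_comm, ← mul_assoc,
        pow_succ, ← neg_smul]
      congr 1
      ring
    calc c * (orderedProd a (insert i S) * f)
        = (c * a i + a i * c) * (orderedProd a S * f)
          - a i * (c * (orderedProd a S * f)) := by
          rw [orderedProd_insert a hi]; noncomm_ring
      _ = t i • (orderedProd a S * f) - a i * ∑ j ∈ S,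
            ((-1) ^ #{s ∈ S | s < j} * t j) • (orderedProd a (S.erase j) * f) := by
          rw [hc, ih, Algebra.smul_def]
      _ = _ := by
          rw [sum_insert hiS, sum_congr rfl later_term, none_below, erase_insert hiS, pow_zero,
            one_mul, sum_neg_distrib, mul_sum, sub_eq_add_neg]

/-- `w` obeys the first-row expansion of the sub-Pfaffians of a skew-symmetric matrix `B`. Only the
entries of `B` above the diagonal enter, and `w` vanishes on sets of odd cardinality. -/
structure IsPfaffianWeight (B : ι → ι → K) (w : Finset ι → K) : Prop where
  empty : w ∅ = 1
  insert_min : ∀ (i : ι) (J : Finset ι), (∀ j ∈ J, i < j) →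
    w (insert i J) = ∑ j ∈ J, (-1) ^ #{k ∈ J | k < j} * B i j * w (J.erase j)

lemma neg_one_pow_crossings_insert {i j : ι} {I T : Finset ι} (hiI : ∀ k ∈ I, i < k)
    (hiT : ∀ s ∈ T, i < s) (hij : i < j) (hjI : j ∉ I) (hjT : j ∉ T) :
    (-1 : K) ^ crossings (insert i (insert j I)) T * (-1) ^ #{k ∈ insert j I | k < j} =
      (-1) ^ crossings I (insert j T) * (-1) ^ #{s ∈ insert j T | s < j} := by
  have i_notMem : i ∉ insert j I := by grind
  have above_i : {s ∈ T | i < s} = T := by grind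
  have below_j (X : Finset ι) : {x ∈ insert j X | x < j} = {x ∈ X | x < j} := by grind
  rw [crossings_insert_left i_notMem, crossings_insert_left hjI, crossings_insert_right I hjT,
    above_i, below_j, below_j, ← card_filter_lt_add_card_filter_gt hjT, ← pow_add, ← pow_add]
  exact neg_one_pow_congr (by grind)

/-- The sum over `I ⊆ S` of `± w I • a_{S \ I} f`, where `±` is the sign of moving `I` to the right
of `S \ I`: the result of contracting the factors indexed by `I` in an ordered product over `S`
applied to `f`. -/
def wickSum (w : Finset ι → K) (a : ι → R) (f : R) (S : Finset ι) : R :=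
  ∑ I ∈ S.powerset, ((-1) ^ crossings I (S \ I) * w I) • (orderedProd a (S \ I) * f)

lemma mul_wickSum_of_forall_lt {i : ι} {S : Finset ι} (w : Finset ι → K) (a : ι → R) (f : R)
    (hi : ∀ j ∈ S, i < j) :
    a i * wickSum w a f S =
      ∑ I ∈ S.powerset, ((-1) ^ crossings I (insert i S \ I) * w I) •
        (orderedProd a (insert i S \ I) * f) := by
  rw [wickSum, mul_sum]
  refine sum_congr rfl fun I hI => ?_
  have hIS : I ⊆ S := mem_powerset.1 hI
  have none_below : {k ∈ I | k < i} = ∅ := by grind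
  rw [insert_sdiff_of_notMem S (by grind), crossings_insert_right I (by grind), none_below,
    card_empty, zero_add, orderedProd_insert a (by grind), mul_smul_comm, mul_assoc]

namespace IsPfaffianWeight

variable {B : ι → ι → K} {w : Finset ι → K} {i : ι} {S : Finset ι}

lemma mul_wickSum (hw : IsPfaffianWeight B w) {a : ι → R} {c f : R}
    (hc : ∀ j, c * a j + a j * c = algebraMap K R (B i j)) (hf : c * f = 0)
    (hi : ∀ j ∈ S, i < j) :
    c * wickSum w a f S =
      ∑ J ∈ S.powerset, ((-1) ^ crossings (insert i J) (S \ J) * w (insert i J)) •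
        (orderedProd a (S \ J) * f) := by
  simp_rw [wickSum, mul_sum, mul_smul_comm, mul_orderedProd_mul_eq_sum hc hf, smul_sum, smul_smul]
  rw [sum_powerset_sum_sdiff]
  refine sum_congr rfl fun J hJ => ?_
  have hJS : J ⊆ S := mem_powerset.1 hJ
  rw [hw.insert_min i J fun j hj => hi j (hJS hj), mul_sum, sum_smul]
  refine sum_congr rfl fun j hj => ?_
  have sdiff_erase_eq : S \ J.erase j = insert j (S \ J) := by grind
  have erase_eq : (insert j (S \ J)).erase j = S \ J := erase_insert (by grind)
  have sign_eq := neg_one_pow_crossings_insert (K := K) (i := i) (j := j) (I := J.erase j)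
    (T := S \ J) (by grind) (by grind) (hi j (hJS hj)) (by grind) (by grind)
  rw [insert_erase hj] at sign_eq
  rw [sdiff_erase_eq, erase_eq]
  congr 1
  linear_combination -(B i j * w (J.erase j)) * sign_eq

theorem orderedProd_add_mul_eq_wickSum (hw : IsPfaffianWeight B w) {a c : ι → R} {f : R}
    (hc : ∀ i j, c i * a j + a j * c i = algebraMap K R (B i j)) (hf : ∀ i, c i * f = 0)
    (S : Finset ι) :
    orderedProd (fun i => a i + c i) S * f = wickSum w a f S := by
  induction S using Finset.induction_on_min with
  | empty => simp [wickSum, hw.empty, crossings]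
  | insert i S hi ih =>
    have hiS : i ∉ S := fun h => (hi i h).false
    have insert_sdiff_insert_eq (J : Finset ι) : insert i S \ insert i J = S \ J := by grind
    rw [orderedProd_insert _ hi, mul_assoc, ih, add_mul, mul_wickSum_of_forall_lt w a f hi,
      hw.mul_wickSum (hc i) (hf i) hi, wickSum, sum_powerset_insert hiS]
    simp_rw [insert_sdiff_insert_eq]

end IsPfaffianWeight

lemma isPfaffianWeight_PfI {n : ℕ} {A : Matrix (Fin n) (Fin n) ℝ} (hA : Aᵀ = -A) :
    IsPfaffianWeight A fun I => if Even #I then PfI A I else 0 where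
  empty := by simp [PfI_empty]
  insert_min i J hi := by
    have card_insert_eq : #(insert i J) = #J + 1 :=
      card_insert_of_notMem fun h => (hi i h).false
    rcases Nat.even_or_odd #J with even_card | odd_card
    · rw [if_neg (by grind)]
      refine (sum_eq_zero fun j hj => ?_).symm
      rw [if_neg (by grind [card_erase_add_one hj]), mul_zero]
    · rw [if_pos (by grind), PfI_insert_eq_sum hA hi odd_card]
      refine sum_congr rfl fun j hj => ?_
      rw [if_pos (by grind [card_erase_add_one hj])]

end Wick

section Clifford

open Finset CliffordAlgebra

lemma mul_list_prod_eq_zero_of_anticomm {R : Type*} [Ring R] {x : R} {l : List R} (hx : x * x = 0)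
    (hxl : x ∈ l) (anticomm : ∀ y ∈ l, x * y = -(y * x)) : x * l.prod = 0 := by
  induction l with
  | nil => simp at hxl
  | cons y l ih =>
    rw [List.prod_cons, ← mul_assoc]
    rcases List.mem_cons.1 hxl with rfl | hmem
    · rw [hx, zero_mul]
    · rw [anticomm y List.mem_cons_self, neg_mul, mul_assoc,
        ih hmem fun z hz => anticomm z (List.mem_cons_of_mem y hz), mul_zero, neg_zero]

variable {n : ℕ}

lemma evec_apply_left (i j : Fin n) :
    evec n j ⟨i, by omega⟩ = if i = j then 1 else 0 := by
  simp [evec, Pi.single_apply, Fin.ext_iff]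

lemma evec_apply_right (i j : Fin n) : evec n j ⟨n + i, by omega⟩ = 0 :=
  Pi.single_eq_of_ne (Fin.ne_of_val_ne (by lia)) 1

lemma fvec_apply_left (i j : Fin n) : fvec n j ⟨i, by omega⟩ = 0 :=
  Pi.single_eq_of_ne (Fin.ne_of_val_ne (by lia)) 1

lemma fvec_apply_right (i j : Fin n) :
    fvec n j ⟨n + i, by omega⟩ = if i = j then 1 else 0 := by
  simp [fvec, Pi.single_apply, Fin.ext_iff]

/-- The split quadratic form `x ↦ 2 ∑ xᵢ xₙ₊ᵢ` on `ℝ²ⁿ`, for which the `evec`s and the `fvec`s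
span complementary isotropic subspaces. -/
def IsSplitForm (Q : QuadraticForm ℝ (Fin (2 * n) → ℝ)) : Prop :=
  ∀ x, Q x = 2 * ∑ i : Fin n, x ⟨i, by omega⟩ * x ⟨n + i, by omega⟩

lemma hElt_eq_orderedProd (Q : QuadraticForm ℝ (Fin (2 * n) → ℝ)) (A : Matrix (Fin n) (Fin n) ℝ) :
    hElt Q A =
      orderedProd (fun i => ι Q (evec n i) + ι Q (∑ j, A i j • fvec n j)) univ := by
  rw [hElt, orderedProd, Fin.sort_univ, List.ofFn_eq_map]
  simp only [map_add]

namespace IsSplitForm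

variable {Q : QuadraticForm ℝ (Fin (2 * n) → ℝ)}

lemma polar_eq (hQ : IsSplitForm Q) (x y : Fin (2 * n) → ℝ) :
    QuadraticMap.polar Q x y = 2 * ∑ i : Fin n,
      (x ⟨i, by omega⟩ * y ⟨n + i, by omega⟩ + y ⟨i, by omega⟩ * x ⟨n + i, by omega⟩) := by
  rw [QuadraticMap.polar, hQ, hQ, hQ, ← mul_sub, ← mul_sub, ← sum_sub_distrib, ← sum_sub_distrib]
  refine congrArg (2 * ·) (sum_congr rfl fun i _ => ?_)
  simp only [Pi.add_apply]
  ring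

lemma ι_fvec_mul_self (hQ : IsSplitForm Q) (j : Fin n) :
    ι Q (fvec n j) * ι Q (fvec n j) = 0 := by
  rw [ι_sq_scalar, hQ]
  simp [fvec_apply_left]

lemma ι_fvec_anticomm (hQ : IsSplitForm Q) (i j : Fin n) :
    ι Q (fvec n i) * ι Q (fvec n j) = -(ι Q (fvec n j) * ι Q (fvec n i)) := by
  rw [eq_neg_iff_add_eq_zero, ι_mul_ι_add_swap, hQ.polar_eq]
  simp [fvec_apply_left]

lemma ι_fvec_mul_fElt (hQ : IsSplitForm Q) (i : Fin n) : ι Q (fvec n i) * fElt Q = 0 := by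
  refine mul_list_prod_eq_zero_of_anticomm (hQ.ι_fvec_mul_self i) (List.mem_ofFn.2 ⟨i, rfl⟩) ?_
  intro y hy
  obtain ⟨j, rfl⟩ := List.mem_ofFn.1 hy
  exact hQ.ι_fvec_anticomm i j

lemma ι_sum_fvec_mul_fElt (hQ : IsSplitForm Q) (t : Fin n → ℝ) :
    ι Q (∑ j, t j • fvec n j) * fElt Q = 0 := by
  simp [sum_mul, hQ.ι_fvec_mul_fElt]

lemma ι_sum_fvec_mul_ι_evec_add_swap (hQ : IsSplitForm Q) (t : Fin n → ℝ) (j : Fin n) :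
    ι Q (∑ k, t k • fvec n k) * ι Q (evec n j) + ι Q (evec n j) * ι Q (∑ k, t k • fvec n k) =
      algebraMap ℝ (CliffordAlgebra Q) (2 * t j) := by
  rw [ι_mul_ι_add_swap, hQ.polar_eq]
  simp [Finset.sum_apply, evec_apply_left, evec_apply_right, fvec_apply_left, fvec_apply_right]

end IsSplitForm

end Clifford

/-- In the Clifford algebra of the quadratic form
`Q(x) = 2 Σ_{i=1}^n x_i x_{n+i}` on `ℝ^{2n}`, with `f = ι(f_1)⋯ι(f_n)` and
`h = Π_i ι(e_i + Σ_j A_{ij} f_j)`, one has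
`h·f = Σ_{|I| even} sgn(I,[n]) 2^{|I|/2} Pf_I(A) e_{[n]∖I}·f`. -/
theorem pure_spinor_expansion (n : ℕ) (hn : 1 ≤ n)
    (Q : QuadraticForm ℝ (Fin (2 * n) → ℝ))
    (hQ : ∀ x : Fin (2 * n) → ℝ,
      Q x = 2 * ∑ i : Fin n,
        x ⟨(i : ℕ), by have := i.isLt; omega⟩ *
          x ⟨n + (i : ℕ), by have := i.isLt; omega⟩)
    (A : Matrix (Fin n) (Fin n) ℝ) (hA : Aᵀ = -A) :
    hElt Q A * fElt Q =
      ∑ I ∈ Finset.univ.filter (fun I : Finset (Fin n) => Even I.card),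
        (sgnSet I * (2 : ℝ) ^ (I.card / 2) * PfI A I) • (eProd Q Iᶜ * fElt Q) := by
  have split : IsSplitForm Q := hQ
  have weight := isPfaffianWeight_PfI (A := (2 : ℝ) • A) (by rw [transpose_smul, hA, smul_neg])
  have expansion := weight.orderedProd_add_mul_eq_wickSum
    (fun i j => split.ι_sum_fvec_mul_ι_evec_add_swap (A i) j)
    (fun i => split.ι_sum_fvec_mul_fElt (A i)) Finset.univ
  rw [hElt_eq_orderedProd, expansion, wickSum, Finset.powerset_univ, Finset.sum_filter]
  refine Finset.sum_congr rfl fun I _ => ?_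
  split_ifs with even_card
  · rw [PfI_smul, ← Finset.compl_eq_univ_sdiff, ← sgnSet_eq_neg_one_pow_crossings even_card,
      ← mul_assoc]
    rfl
  · rw [mul_zero, zero_smul]
end
end
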